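/- Quantitative homogenization for a shear flow (Taylor diffusion estimate): let κ, a, ε > 0, set 𝐚^ε(x) := κ I₂ + aε² sin(2πx₂/ε) I₂^⊥ and 𝐚̄ := diag(κ + a²ε⁴/(2κ), κ). There is a universal constant C such that the following holds. Let θ be a smooth solution of ∂_t θ = div(𝐚̄∇θ) on [0,1]×T². For R > 0 and (t₀,x₀), define the ellipsoid E_R := { x ∈ ℝ² : κ x₁²/(κ + a²ε⁴/(2κ)) + x₂² ≤ R² } and the parabolic cylinder Q_R(t₀,x₀) := (t₀ − R²/κ, t₀] × (x₀ + E_R). Assume Q_{2R}(t₀,x₀) ⊆ [0,1]×T², and let θ_ε be a smooth solution of ∂_t θ_ε = div(𝐚^ε∇θ_ε) in Q_R(t₀,x₀) with θ_ε = θ on the parabolic boundary ∂_par Q_R (the set of boundary points of Q_R other than the interior of the final time slice). Then sup over t ∈ (t₀−R²/κ, t₀] of the volume-normalized norm ( ⨍_{x₀+E_R} |θ_ε(t,·) − θ(t,·)|² )^{1/2} is at most C (1 + aε²/κ) (ε/R) ( ⨍_{Q_{2R}} |θ|² )^{1/2}. In particular, when R ≫ ε(1 + aε²/κ), θ_ε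 is close to θ relative to the size of θ. -/

import Mathlib

open MeasureTheory Real Topology Filter

noncomputable section

/-- Spatial partial derivative `∂_i f` (via the Fréchet derivative). -/
def pd {d : ℕ} (f : (Fin d → ℝ) → ℝ) (i : Fin d) (x : Fin d → ℝ) : ℝ :=
  fderiv ℝ f x (Pi.single i 1)

/-- The unit box `[0,1]^d`, a fundamental domain for the torus `T^d = ℝ^d/ℤ^d`. -/
def box (d : ℕ) : Set (Fin d → ℝ) := Set.Icc 0 1

/-- `ℤ^d`-periodicity in the space variable (functions on the torus `T^d`). -/
def SpacePeriodic {d : ℕ} (f : (Fin d → ℝ) → ℝ) : Prop :=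
  ∀ (x : Fin d → ℝ) (k : Fin d → ℤ), f (x + fun i => (k i : ℝ)) = f x

/-- Squared length of the spatial gradient, `|∇f|²(x)`. -/
def gradSq {d : ℕ} (f : (Fin d → ℝ) → ℝ) (x : Fin d → ℝ) : ℝ :=
  ∑ i, (pd f i x) ^ 2

/-- Squared `L²(T^d)` norm. -/
def l2sq {d : ℕ} (f : (Fin d → ℝ) → ℝ) : ℝ := ∫ x in box d, (f x) ^ 2

/-- The dissipation `∫_0^t ‖∇θ(s,·)‖²_{L²(T^d)} ds`. -/
def dissipUpTo {d : ℕ} (θ : ℝ → (Fin d → ℝ) → ℝ) (t : ℝ) : ℝ :=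
  ∫ s in Set.Icc (0:ℝ) t, ∫ x in box d, gradSq (θ s) x

/-- The dissipation `∫_0^1 ∫_{T^d} |∇θ|² dx dt`. -/
def dissip {d : ℕ} (θ : ℝ → (Fin d → ℝ) → ℝ) : ℝ := dissipUpTo θ 1

/-- The 2×2 rotation matrix `I₂^⊥`. -/
def Iperp : Fin 2 → Fin 2 → ℝ := fun i j =>
  if i = 1 ∧ j = 0 then 1 else if i = 0 ∧ j = 1 then -1 else 0

/-- The oscillating matrix `𝐚^ε(x) = κI₂ + aε² sin(2πx₂/ε) I₂^⊥`. -/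
def aEps (κ a ε : ℝ) (x : Fin 2 → ℝ) (i j : Fin 2) : ℝ :=
  κ * (if i = j then 1 else 0)
    + a * ε ^ 2 * Real.sin (2 * π * x 1 / ε) * Iperp i j

/-- The ellipsoid `E_R` (centred at `c`) adapted to the homogenized matrix
`𝐚̄ = diag(κ + a²ε⁴/(2κ), κ)`. -/
def ellipsoid (κ a ε : ℝ) (c : Fin 2 → ℝ) (R : ℝ) : Set (Fin 2 → ℝ) :=
  {x | κ * (x 0 - c 0) ^ 2 / (κ + a ^ 2 * ε ^ 4 / (2 * κ))
        + (x 1 - c 1) ^ 2 ≤ R ^ 2}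

/-- The parabolic cylinder `Q_R(t₀,x₀) = (t₀ − R²/κ, t₀] × (x₀ + E_R)`. -/
def pCyl (κ a ε t₀ : ℝ) (x₀ : Fin 2 → ℝ) (R : ℝ) : Set (ℝ × (Fin 2 → ℝ)) :=
  Set.Ioc (t₀ - R ^ 2 / κ) t₀ ×ˢ ellipsoid κ a ε x₀ R

/-- The parabolic boundary `∂_par Q_R`: the boundary points of `Q_R` other than
the interior of the final time slice. -/
def pBdry (κ a ε t₀ : ℝ) (x₀ : Fin 2 → ℝ) (R : ℝ) : Set (ℝ × (Fin 2 → ℝ)) :=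
  (Set.Icc (t₀ - R ^ 2 / κ) t₀ ×ˢ ellipsoid κ a ε x₀ R)
    \ (Set.Ioc (t₀ - R ^ 2 / κ) t₀ ×ˢ interior (ellipsoid κ a ε x₀ R))

/-!
After an affine change of variables the ellipsoid becomes a disc, the homogenized equation becomes
the heat equation, and the shear becomes a drift `β k cos(k x₂ + p) ∂₁` of frequency
`k = 2πR/ε`, with longitudinal diffusivity `1 - β²/2`. Here `β = P / √(1 + P²/2)` with `P = aε²/κ`,
so that `β² ≤ 2` however large `P` is, and all estimates are uniform in the parameters.

A local energy inequality applied to every spatial derivative, followed by a Sobolev inequality,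
bounds the derivatives of a solution `u` of the heat equation on the inner box by the `L²` norm
of `u` on a larger one. Adding the correctors to `u` gives a two-scale expansion `w` which differs
from `u` by `O(1/k)` and solves the oscillating equation up to an error `O(1/k)`. The maximum
principle, applied to `θ_ε - w`, turns this into the pointwise bound `|θ_ε - θ| = O(1/k)`.
-/

open scoped ContDiff

section PartialDerivatives

variable {d : ℕ} {f g : (Fin d → ℝ) → ℝ} {x : Fin d → ℝ}

theorem contDiff_pd (hf : ContDiff ℝ ∞ f) (i : Fin d) : ContDiff ℝ ∞ (pd f i) :=
  (hf.fderiv_right (m := ∞) (by simp)).clm_apply contDiff_const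

theorem differentiable_pd (hf : ContDiff ℝ ∞ f) (i : Fin d) : Differentiable ℝ (pd f i) :=
  (contDiff_pd hf i).differentiable (by simp)

theorem pd_congr_of_eventuallyEq (h : f =ᶠ[𝓝 x] g) (i : Fin d) : pd f i x = pd g i x := by
  rw [pd, pd, h.fderiv_eq]

theorem pd_const (c : ℝ) (i : Fin d) : pd (fun _ => c) i = fun _ => 0 := by
  funext y
  simp [pd]

theorem pd_add (hf : DifferentiableAt ℝ f x) (hg : DifferentiableAt ℝ g x) (i : Fin d) :
    pd (fun y => f y + g y) i x = pd f i x + pd g i x := by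
  simp only [pd, fderiv_fun_add hf hg, add_apply]

theorem pd_sum {ι : Type*} (s : Finset ι) {F : ι → (Fin d → ℝ) → ℝ}
    (hF : ∀ k ∈ s, DifferentiableAt ℝ (F k) x) (i : Fin d) :
    pd (fun y => ∑ k ∈ s, F k y) i x = ∑ k ∈ s, pd (F k) i x := by
  simp only [pd, fderiv_fun_sum hF, sum_apply]

theorem pd_mul (hf : DifferentiableAt ℝ f x) (hg : DifferentiableAt ℝ g x) (i : Fin d) :
    pd (fun y => f y * g y) i x = pd f i x * g x + f x * pd g i x := by
  simp only [pd, fderiv_fun_mul hf hg, add_apply, smul_apply, smul_eq_mul]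
  ring

theorem pd_const_mul (hf : DifferentiableAt ℝ f x) (c : ℝ) (i : Fin d) :
    pd (fun y => c * f y) i x = c * pd f i x := by
  simp only [pd, fderiv_const_mul hf, smul_apply, smul_eq_mul]

theorem pd_pd_eq_fderiv_fderiv (hf : ContDiffAt ℝ 2 f x) (i j : Fin d) :
    pd (pd f i) j x = fderiv ℝ (fderiv ℝ f) x (Pi.single j 1) (Pi.single i 1) := by
  have hd : DifferentiableAt ℝ (fderiv ℝ f) x :=
    (hf.fderiv_right (m := 1) (by norm_num)).differentiableAt (by simp)
  unfold pd
  rw [fderiv_clm_apply hd (differentiableAt_const _)]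
  simp

theorem pd_comm_of_contDiffAt (hf : ContDiffAt ℝ 2 f x) (i j : Fin d) :
    pd (pd f i) j x = pd (pd f j) i x := by
  rw [pd_pd_eq_fderiv_fderiv hf, pd_pd_eq_fderiv_fderiv hf]
  exact hf.isSymmSndFDerivAt (by simp) _ _

theorem pd_comm (hf : ContDiff ℝ ∞ f) (i j : Fin d) : pd (pd f i) j = pd (pd f j) i :=
  funext fun _ => pd_comm_of_contDiffAt ((contDiff_infty.1 hf 2).contDiffAt) i j

theorem hasDerivAt_comp_update (i : Fin d) (τ : ℝ)
    (hf : DifferentiableAt ℝ f (Function.update x i τ)) :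
    HasDerivAt (fun τ => f (Function.update x i τ)) (pd f i (Function.update x i τ)) τ :=
  hf.hasFDerivAt.comp_hasDerivAt τ (hasDerivAt_update x i τ)

theorem pd_eq_deriv_comp_update (i : Fin d) (hf : DifferentiableAt ℝ f x) :
    pd f i x = deriv (fun τ => f (Function.update x i τ)) (x i) := by
  simpa only [Function.update_eq_self] using
    (hasDerivAt_comp_update (x := x) i (x i) (by simpa using hf)).deriv.symm

theorem pd_comp_eval {h : ℝ → ℝ} {i : Fin d} (hh : DifferentiableAt ℝ h (x i)) (j : Fin d) :
    pd (fun y => h (y i)) j x = if j = i then deriv h (x i) else 0 := by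
  have hproj : HasFDerivAt (fun y : Fin d → ℝ => y i) (ContinuousLinearMap.proj (R := ℝ) i) x :=
    hasFDerivAt_apply i x
  have hcomp : HasFDerivAt (fun y => h (y i)) (deriv h (x i) • _) x :=
    hh.hasDerivAt.comp_hasFDerivAt x hproj
  rw [pd, hcomp.fderiv]
  simp [Pi.single_apply, eq_comm]

/-- Coordinatewise multiplication by the nonzero scales `l`. -/
def scaleEquiv (l : Fin d → ℝ) (hl : ∀ i, l i ≠ 0) : (Fin d → ℝ) ≃L[ℝ] (Fin d → ℝ) :=
  ContinuousLinearEquiv.piCongrRight fun i =>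
    ContinuousLinearEquiv.unitsEquivAut ℝ (.mk0 _ (hl i))

theorem scaleEquiv_apply (l : Fin d → ℝ) (hl : ∀ i, l i ≠ 0) (y : Fin d → ℝ) :
    scaleEquiv l hl y = l * y := by
  ext i
  simp [scaleEquiv, mul_comm]

theorem pd_comp_add_mul (f : (Fin d → ℝ) → ℝ) (c : Fin d → ℝ) {l : Fin d → ℝ}
    (hl : ∀ i, l i ≠ 0) (i : Fin d) :
    pd (fun y => f (c + l * y)) i = fun y => l i * pd f i (c + l * y) := by
  funext y
  have h := (scaleEquiv l hl).comp_right_fderiv (f := fun z => f (c + z)) (x := y)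
  simp only [Function.comp_def, scaleEquiv_apply] at h
  have hs : l * Pi.single i 1 = l i • (Pi.single i 1 : Fin d → ℝ) := by
    ext j; by_cases hj : j = i <;> simp [hj]
  rw [pd, h, fderiv_comp_add_left, pd]
  simp [scaleEquiv_apply, hs]

end PartialDerivatives

section Slices

variable {n : ℕ} {w : (Fin (n + 1) → ℝ) → ℝ}

theorem contDiff_vecCons : ContDiff ℝ ∞ fun p : ℝ × (Fin n → ℝ) => Matrix.vecCons p.1 p.2 :=
  (Fin.consEquivL ℝ fun _ : Fin (n + 1) => ℝ).contDiff

theorem contDiff_comp_vecCons (hw : ContDiff ℝ ∞ w) (t : ℝ) :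
    ContDiff ℝ ∞ fun x : Fin n → ℝ => w (Matrix.vecCons t x) :=
  (hw.comp contDiff_vecCons).comp (contDiff_prodMk_right t)

theorem pd_comp_vecCons (hw : ContDiff ℝ ∞ w) (t : ℝ) (i : Fin n) :
    pd (fun x => w (Matrix.vecCons t x)) i = fun x => pd w i.succ (Matrix.vecCons t x) := by
  funext x
  rw [pd_eq_deriv_comp_update i ((contDiff_comp_vecCons hw t).differentiable (by simp) x),
    pd_eq_deriv_comp_update i.succ (hw.differentiable (by simp) _), Matrix.cons_val_succ]
  simp only [Matrix.vecCons, Fin.cons_update]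

theorem hasDerivAt_comp_vecCons (hw : ContDiff ℝ ∞ w) (t : ℝ) (x : Fin n → ℝ) :
    HasDerivAt (fun s => w (Matrix.vecCons s x)) (pd w 0 (Matrix.vecCons t x)) t := by
  have h := hasDerivAt_comp_update (x := Matrix.vecCons t x) 0 t
    (hw.differentiable (by simp) _)
  simpa only [Matrix.vecCons, Fin.update_cons_zero] using h

end Slices

section Sobolev

variable {g g' : ℝ → ℝ} {a b x : ℝ}

theorem abs_sq_sub_sq_le_integral_sq_add_deriv_sq (hg : ∀ t, HasDerivAt g (g' t) t)
    (hg' : Continuous g') {y : ℝ} (hx : x ∈ Set.Icc a b) (hy : y ∈ Set.Icc a b) :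
    |g x ^ 2 - g y ^ 2| ≤ ∫ t in Set.Icc a b, (g t ^ 2 + g' t ^ 2) := by
  have cg : Continuous g := continuous_iff_continuousAt.2 fun t => (hg t).continuousAt
  have hsub : Set.uIoc y x ⊆ Set.Icc a b :=
    Set.uIoc_subset_uIcc.trans (Set.uIcc_subset_Icc hy hx)
  have hint {f : ℝ → ℝ} (hf : Continuous f) : IntegrableOn f (Set.Icc a b) := hf.integrableOn_Icc
  have ftc : ∫ t in y..x, 2 * g t * g' t = g x ^ 2 - g y ^ 2 :=
    intervalIntegral.integral_eq_sub_of_hasDerivAt (f := fun x => g x ^ 2)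
      (fun t _ => by simpa using (hg t).fun_pow 2)
      ((by fun_prop : Continuous fun t => 2 * g t * g' t).intervalIntegrable _ _)
  calc |g x ^ 2 - g y ^ 2| = ‖∫ t in y..x, 2 * g t * g' t‖ := by rw [ftc, Real.norm_eq_abs]
    _ ≤ ∫ t in Set.uIoc y x, ‖2 * g t * g' t‖ :=
        intervalIntegral.norm_integral_le_integral_norm_uIoc
    _ ≤ ∫ t in Set.uIoc y x, (g t ^ 2 + g' t ^ 2) := by
        refine setIntegral_mono ((hint (by fun_prop)).mono_set hsub)
          ((hint (by fun_prop)).mono_set hsub) fun t => ?_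
        simpa only [norm_mul, Real.norm_eq_abs, Nat.abs_ofNat, sq_abs] using
          two_mul_le_add_sq |g t| |g' t|
    _ ≤ ∫ t in Set.Icc a b, (g t ^ 2 + g' t ^ 2) :=
        setIntegral_mono_set (hint (by fun_prop)) (Eventually.of_forall fun t => by positivity)
          hsub.eventuallyLE

theorem sq_le_mul_integral_sq_add_deriv_sq (hab : a < b) (hg : ∀ t, HasDerivAt g (g' t) t)
    (hg' : Continuous g') (hx : x ∈ Set.Icc a b) :
    g x ^ 2 ≤ ((b - a)⁻¹ + 1) * ∫ t in Set.Icc a b, (g t ^ 2 + g' t ^ 2) := by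
  have cg : Continuous g := continuous_iff_continuousAt.2 fun t => (hg t).continuousAt
  have hint {f : ℝ → ℝ} (hf : Continuous f) : IntegrableOn f (Set.Icc a b) := hf.integrableOn_Icc
  set I := ∫ t in Set.Icc a b, (g t ^ 2 + g' t ^ 2) with hI
  have hba : 0 < b - a := sub_pos.2 hab
  have haverage : (b - a) * g x ^ 2 ≤ I + (b - a) * I :=
    calc (b - a) * g x ^ 2 = ∫ _ in Set.Icc a b, g x ^ 2 := by simp [hab.le]
      _ ≤ ∫ y in Set.Icc a b, (g y ^ 2 + g' y ^ 2 + I) := by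
          refine setIntegral_mono_on (hint (by fun_prop)) (hint (by fun_prop)) measurableSet_Icc
            fun y hy => ?_
          have := (le_abs_self _).trans
            (abs_sq_sub_sq_le_integral_sq_add_deriv_sq hg hg' hx hy)
          linarith [sq_nonneg (g' y)]
      _ = I + (b - a) * I := by
          rw [integral_add (hint (by fun_prop)) (hint (by fun_prop)), ← hI]
          simp [hab.le]
  calc g x ^ 2 = (b - a)⁻¹ * ((b - a) * g x ^ 2) := by field_simp
    _ ≤ (b - a)⁻¹ * (I + (b - a) * I) := by gcongr
    _ = ((b - a)⁻¹ + 1) * I := by field_simp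

variable {d : ℕ}

/-- The Sobolev density `∑_α |∂^α f|²`, the sum running over all sublists `α` of the list of
directions `l`; for `l` a list of distinct directions, its integral is the squared norm of `f` in
the Sobolev space of dominating mixed smoothness of order one in the directions of `l`. -/
def sobolevDensity : List (Fin d) → ((Fin d → ℝ) → ℝ) → (Fin d → ℝ) → ℝ
  | [], f, x => f x ^ 2
  | i :: l, f, x => sobolevDensity l f x + sobolevDensity l (pd f i) x

theorem sobolevDensity_nonneg (l : List (Fin d)) (f : (Fin d → ℝ) → ℝ) (x : Fin d → ℝ) :
    0 ≤ sobolevDensity l f x := by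
  induction l generalizing f with
  | nil => exact sq_nonneg _
  | cons i l ih => exact add_nonneg (ih f) (ih (pd f i))

theorem continuous_sobolevDensity (l : List (Fin d)) {f : (Fin d → ℝ) → ℝ}
    (hf : ContDiff ℝ ∞ f) : Continuous (sobolevDensity l f) := by
  induction l generalizing f with
  | nil => exact hf.continuous.pow 2
  | cons i l ih => exact (ih hf).add (ih (contDiff_pd hf i))

theorem ofReal_sq_le_lintegral_update {f : (Fin d → ℝ) → ℝ} (hf : ContDiff ℝ ∞ f) {i : Fin d}
    (hab : a < b) {x : Fin d → ℝ} (hx : x i ∈ Set.Icc a b) :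
    ENNReal.ofReal (f x ^ 2) ≤ ENNReal.ofReal ((b - a)⁻¹ + 1) * ∫⁻ t in Set.Icc a b,
      (ENNReal.ofReal (f (Function.update x i t) ^ 2)
        + ENNReal.ofReal (pd f i (Function.update x i t) ^ 2)) := by
  have cf := hf.continuous
  have cf' := (contDiff_pd hf i).continuous
  have hbound := sq_le_mul_integral_sq_add_deriv_sq hab (g := fun t => f (Function.update x i t))
    (fun t => hasDerivAt_comp_update i t (hf.differentiable (by simp) _)) (by fun_prop) hx
  simp_rw [← ENNReal.ofReal_add (sq_nonneg _) (sq_nonneg _)]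
  rw [← ofReal_integral_eq_lintegral_ofReal
      (by fun_prop : Continuous _).integrableOn_Icc
      (Eventually.of_forall fun t => by positivity),
    ← ENNReal.ofReal_mul (by have := sub_pos.2 hab; positivity)]
  exact ENNReal.ofReal_le_ofReal (by simpa only [Function.update_eq_self] using hbound)

theorem ofReal_sq_le_lmarginal_sobolevDensity {a b : Fin d → ℝ} (hab : ∀ i, a i < b i)
    {l : List (Fin d)} (hl : l.Nodup) {f : (Fin d → ℝ) → ℝ} (hf : ContDiff ℝ ∞ f)
    {x : Fin d → ℝ} (hx : ∀ i ∈ l, x i ∈ Set.Icc (a i) (b i)) :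
    ENNReal.ofReal (f x ^ 2) ≤ ENNReal.ofReal (l.map fun i => (b i - a i)⁻¹ + 1).prod *
      lmarginal (fun i => volume.restrict (Set.Icc (a i) (b i))) l.toFinset
        (fun y => ENNReal.ofReal (sobolevDensity l f y)) x := by
  induction l generalizing f x with
  | nil => simp [sobolevDensity]
  | cons i l ih =>
    obtain ⟨hil, hl⟩ := List.nodup_cons.1 hl
    set K := ENNReal.ofReal (l.map fun i => (b i - a i)⁻¹ + 1).prod
    set μ : Fin d → Measure ℝ := fun i => volume.restrict (Set.Icc (a i) (b i))
    have hmeas {h : (Fin d → ℝ) → ℝ} (hh : ContDiff ℝ ∞ h) :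
        Measurable fun y => ENNReal.ofReal (sobolevDensity l h y) :=
      (continuous_sobolevDensity l hh).measurable.ennreal_ofReal
    have hslice (h : (Fin d → ℝ) → ℝ) (hh : ContDiff ℝ ∞ h) (t : ℝ) :
        ENNReal.ofReal (h (Function.update x i t) ^ 2) ≤ K * lmarginal μ l.toFinset
          (fun y => ENNReal.ofReal (sobolevDensity l h y)) (Function.update x i t) := by
      refine ih hl hh fun j hj => ?_
      rw [Function.update_of_ne (by rintro rfl; exact hil hj)]
      exact hx j (List.mem_cons_of_mem i hj)
    calc ENNReal.ofReal (f x ^ 2)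
        ≤ _ := ofReal_sq_le_lintegral_update hf (hab i) (hx i List.mem_cons_self)
      _ ≤ ENNReal.ofReal ((b i - a i)⁻¹ + 1) * ∫⁻ t in Set.Icc (a i) (b i), K *
            lmarginal μ l.toFinset (fun y => ENNReal.ofReal (sobolevDensity (i :: l) f y))
              (Function.update x i t) := by
          gcongr with t
          refine (add_le_add (hslice f hf t) (hslice _ (contDiff_pd hf i) t)).trans_eq ?_
          simp only [sobolevDensity,
            ENNReal.ofReal_add (sobolevDensity_nonneg _ _ _) (sobolevDensity_nonneg _ _ _)]
          rw [lmarginal, lmarginal, lmarginal, lintegral_add_left, mul_add]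
          exact (hmeas hf).comp measurable_updateFinset
      _ = _ := by
          rw [lintegral_const_mul' _ _ ENNReal.ofReal_ne_top, List.map_cons, List.prod_cons,
            List.toFinset_cons, lmarginal_insert _ _ (by simpa using hil), ← mul_assoc,
            ENNReal.ofReal_mul (by have := sub_pos.2 (hab i); positivity)]
          exact (continuous_sobolevDensity _ hf).measurable.ennreal_ofReal

/-- **Sobolev inequality** on a box, in the form that uses only mixed derivatives. -/
theorem sq_le_mul_integral_sobolevDensity {a b : Fin d → ℝ} (hab : ∀ i, a i < b i)
    {f : (Fin d → ℝ) → ℝ} (hf : ContDiff ℝ ∞ f) {l : List (Fin d)} (hl : l.Nodup)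
    (hmem : ∀ i, i ∈ l) {x : Fin d → ℝ} (hx : x ∈ Set.Icc a b) :
    f x ^ 2 ≤ (l.map fun i => (b i - a i)⁻¹ + 1).prod
      * ∫ y in Set.Icc a b, sobolevDensity l f y := by
  have hbox : Measure.pi (fun i => volume.restrict (Set.Icc (a i) (b i)))
      = volume.restrict (Set.Icc a b) := by
    rw [← Set.pi_univ_Icc, volume_pi, Measure.restrict_pi_pi]
  have h := ofReal_sq_le_lmarginal_sobolevDensity hab hl hf fun i _ => ⟨hx.1 i, hx.2 i⟩
  have hprod : 0 ≤ (l.map fun i => (b i - a i)⁻¹ + 1).prod :=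
    List.prod_nonneg <| List.forall_mem_map.2 fun i _ => by have := sub_pos.2 (hab i); positivity
  rw [Finset.eq_univ_iff_forall.2 fun i => List.mem_toFinset.2 (hmem i),
    ← lintegral_eq_lmarginal_univ, hbox, ← ofReal_integral_eq_lintegral_ofReal
      (continuous_sobolevDensity l hf).integrableOn_Icc
      (Eventually.of_forall fun y => sobolevDensity_nonneg l f y),
    ← ENNReal.ofReal_mul hprod] at h
  exact (ENNReal.ofReal_le_ofReal_iff (mul_nonneg hprod
    (integral_nonneg fun y => sobolevDensity_nonneg l f y))).1 h

end Sobolev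

section HeatEquation

variable {n : ℕ} {U V : Set (Fin (n + 1) → ℝ)} {u : (Fin (n + 1) → ℝ) → ℝ}

/-- `u`, smooth on the whole space-time, solves the heat equation at the points of `U`. The
coordinate `0` is time and the coordinates `i.succ` are the space variables. -/
structure IsHeatSolutionOn (U : Set (Fin (n + 1) → ℝ)) (u : (Fin (n + 1) → ℝ) → ℝ) : Prop where
  contDiff : ContDiff ℝ ∞ u
  heat : ∀ x ∈ U, pd u 0 x = ∑ i : Fin n, pd (pd u i.succ) i.succ x

/-- Openness in each space variable separately, time being frozen: this is what is needed to
differentiate an equation holding on `U` in space, and it allows `U` to be closed in time. -/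
def IsSpatiallyOpen (U : Set (Fin (n + 1) → ℝ)) : Prop :=
  ∀ x ∈ U, ∀ i : Fin n, ∀ᶠ τ in 𝓝 (x i.succ), Function.update x i.succ τ ∈ U

theorem IsHeatSolutionOn.mono (hu : IsHeatSolutionOn V u) (h : U ⊆ V) : IsHeatSolutionOn U u :=
  ⟨hu.contDiff, fun x hx => hu.heat x (h hx)⟩

theorem IsHeatSolutionOn.pd_succ (hu : IsHeatSolutionOn U u) (hU : IsSpatiallyOpen U)
    (i : Fin n) : IsHeatSolutionOn U (pd u i.succ) := by
  refine ⟨contDiff_pd hu.contDiff _, fun x hx => ?_⟩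
  have hsmooth (j k : Fin (n + 1)) := differentiable_pd (contDiff_pd hu.contDiff j) k
  calc pd (pd u i.succ) 0 x = pd (pd u 0) i.succ x := by rw [pd_comm hu.contDiff]
    _ = pd (fun y => ∑ k : Fin n, pd (pd u k.succ) k.succ y) i.succ x := by
        rw [pd_eq_deriv_comp_update _ (differentiable_pd hu.contDiff _ _),
          pd_eq_deriv_comp_update _ (by fun_prop)]
        exact Filter.EventuallyEq.deriv_eq ((hU x hx i).mono fun τ hτ => hu.heat _ hτ)
    _ = ∑ k : Fin n, pd (pd (pd u k.succ) k.succ) i.succ x :=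
        pd_sum _ (fun k _ => hsmooth _ _ x) _
    _ = ∑ k : Fin n, pd (pd (pd u i.succ) k.succ) k.succ x :=
        Finset.sum_congr rfl fun k _ => by
          rw [pd_comm (contDiff_pd hu.contDiff _), pd_comm hu.contDiff]

/-- The backward parabolic box `[-r, 0] × [-r, r]ⁿ`. -/
def backwardBox (n : ℕ) (r : ℝ) : Set (Fin (n + 1) → ℝ) :=
  Set.Icc (fun _ => -r) (Matrix.vecCons 0 fun _ => r)

variable {r r' : ℝ}

theorem mem_backwardBox {x : Fin (n + 1) → ℝ} :
    x ∈ backwardBox n r ↔ (-r ≤ x 0 ∧ x 0 ≤ 0) ∧ ∀ i : Fin n, |x i.succ| ≤ r := by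
  simp only [backwardBox, Set.mem_Icc, Pi.le_def, Fin.forall_fin_succ, Matrix.cons_val_zero,
    Matrix.cons_val_succ, abs_le, forall_and]
  tauto

theorem backwardBox_subset (h : r ≤ r') : backwardBox n r ⊆ backwardBox n r' := fun x hx => by
  obtain ⟨⟨h0, h0'⟩, hs⟩ := mem_backwardBox.1 hx
  exact mem_backwardBox.2 ⟨⟨by linarith, h0'⟩, fun i => (hs i).trans h⟩

theorem integrableOn_backwardBox {f : (Fin (n + 1) → ℝ) → ℝ} (hf : Continuous f) :
    IntegrableOn f (backwardBox n r) := hf.integrableOn_Icc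

theorem setIntegral_backwardBox_mono {f : (Fin (n + 1) → ℝ) → ℝ} (hf : Continuous f)
    (hf0 : 0 ≤ f) (h : r ≤ r') : ∫ x in backwardBox n r, f x ≤ ∫ x in backwardBox n r', f x :=
  setIntegral_mono_set (integrableOn_backwardBox hf) (Eventually.of_forall hf0)
    (backwardBox_subset h).eventuallyLE

theorem integral_divergence_nonneg (hr : 0 ≤ r) {F : Fin (n + 1) → (Fin (n + 1) → ℝ) → ℝ}
    (hF : ∀ i, ContDiff ℝ ∞ (F i)) (htop : ∀ x, x 0 = 0 → 0 ≤ F 0 x)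
    (hbot : ∀ x, x 0 = -r → F 0 x = 0)
    (hlat : ∀ (i : Fin n) x, |x i.succ| = r → F i.succ x = 0) :
    0 ≤ ∫ x in backwardBox n r, ∑ i, pd (F i) i x := by
  have hle : (fun _ => -r) ≤ (Matrix.vecCons 0 fun _ => r : Fin (n + 1) → ℝ) := by
    refine Fin.cases ?_ fun i => ?_ <;> simp only [Matrix.cons_val_zero, Matrix.cons_val_succ] <;>
      linarith
  have hcont : Continuous fun x => ∑ i, pd (F i) i x :=
    continuous_finsetSum _ fun i _ => (contDiff_pd (hF i) i).continuous
  have hdiv := integral_divergence_of_hasFDerivAt_off_countable' _ _ hle F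
    (fun i x => fderiv ℝ (F i) x) ∅ Set.countable_empty (fun i => (hF i).continuous.continuousOn)
    (fun x _ i => ((hF i).differentiable (by simp) x).hasFDerivAt) hcont.integrableOn_Icc
  have hlat_zero (i : Fin n) (s : ℝ) (hs : |s| = r) (y : Fin n → ℝ) :
      F i.succ (i.succ.insertNth s y) = 0 := hlat i _ (by simpa using hs)
  have hbot_zero (y : Fin n → ℝ) : F 0 ((0 : Fin (n + 1)).insertNth (-r) y) = 0 :=
    hbot _ (by simp)
  unfold backwardBox
  simp only [pd]
  rw [hdiv, Fin.sum_univ_succ]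
  simp only [Matrix.cons_val_zero, Matrix.cons_val_succ, hbot_zero,
    hlat_zero _ _ (abs_of_nonneg hr), hlat_zero _ _ ((abs_neg r).trans (abs_of_nonneg hr)),
    integral_zero, sub_self, Finset.sum_const_zero, sub_zero, add_zero]
  exact integral_nonneg fun y => htop _ (by simp)

theorem energy_inequality (hr : 0 ≤ r) {ζ : (Fin (n + 1) → ℝ) → ℝ} (hζ : ContDiff ℝ ∞ ζ)
    (hbot : ∀ x, x 0 = -r → ζ x = 0) (hlat : ∀ (i : Fin n) x, |x i.succ| = r → ζ x = 0)
    (hu : IsHeatSolutionOn (backwardBox n r) u) :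
    0 ≤ ∫ x in backwardBox n r, (2 * ζ x * pd ζ 0 x * u x ^ 2
      - ∑ i : Fin n, (4 * ζ x * pd ζ i.succ x * u x * pd u i.succ x
        + 2 * ζ x ^ 2 * pd u i.succ x ^ 2)) := by
  have dζ := hζ.differentiable (by simp)
  have du := hu.contDiff.differentiable (by simp)
  have dpu := fun i => differentiable_pd hu.contDiff i
  have su := fun i => contDiff_pd hu.contDiff i
  let F : Fin (n + 1) → (Fin (n + 1) → ℝ) → ℝ :=
    Matrix.vecCons (fun x => (ζ x * ζ x) * (u x * u x))
      fun i x => -2 * ((ζ x * ζ x) * (u x * pd u i.succ x))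
  have hF : ∀ i, ContDiff ℝ ∞ (F i) :=
    Fin.cases ((hζ.mul hζ).mul (hu.contDiff.mul hu.contDiff)) fun i =>
      contDiff_const.mul ((hζ.mul hζ).mul (hu.contDiff.mul (su i.succ)))
  have h := integral_divergence_nonneg hr hF
    (fun x _ => mul_nonneg (mul_self_nonneg _) (mul_self_nonneg _))
    (fun x hx => by simp [F, hbot x hx]) (fun i x hx => by simp [F, hlat i x hx])
  refine h.trans_eq (setIntegral_congr_fun measurableSet_Icc fun x hx => ?_)
  have htime : pd (F 0) 0 x = 2 * ζ x * pd ζ 0 x * u x ^ 2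
      + ∑ i : Fin n, 2 * ζ x ^ 2 * u x * pd (pd u i.succ) i.succ x := by
    rw [← Finset.mul_sum, ← hu.heat x hx]
    simp only [F, Matrix.cons_val_zero]
    rw [pd_mul ((dζ x).fun_mul (dζ x)) ((du x).fun_mul (du x)), pd_mul (dζ x) (dζ x),
      pd_mul (du x) (du x)]
    ring
  have hspace (i : Fin n) : pd (F i.succ) i.succ x
      = -(4 * ζ x * pd ζ i.succ x * u x * pd u i.succ x + 2 * ζ x ^ 2 * pd u i.succ x ^ 2)
        - 2 * ζ x ^ 2 * u x * pd (pd u i.succ) i.succ x := by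
    simp only [F, Matrix.cons_val_succ]
    rw [pd_const_mul (((dζ x).fun_mul (dζ x)).fun_mul ((du x).fun_mul (dpu _ x))),
      pd_mul ((dζ x).fun_mul (dζ x)) ((du x).fun_mul (dpu _ x)), pd_mul (dζ x) (dζ x),
      pd_mul (du x) (dpu _ x)]
    ring
  simp only [Fin.sum_univ_succ, htime, hspace, Finset.sum_sub_distrib, Finset.sum_neg_distrib]
  ring

theorem exists_boxCutoff (n : ℕ) (hrr : r < r') :
    ∃ ζ : (Fin (n + 1) → ℝ) → ℝ, ContDiff ℝ ∞ ζ ∧ (∀ x, x 0 = -r' → ζ x = 0) ∧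
      (∀ (i : Fin n) x, |x i.succ| = r' → ζ x = 0) ∧ ∀ x ∈ backwardBox n r, 0 < ζ x := by
  refine ⟨fun x => (x 0 + r') * ∏ i : Fin n, (r' ^ 2 - x i.succ ^ 2), ?_, ?_, ?_, ?_⟩
  · exact ((contDiff_apply ℝ ℝ 0).add contDiff_const).mul
      (contDiff_prod fun i _ => contDiff_const.sub ((contDiff_apply ℝ ℝ i.succ).pow 2))
  · intro x hx
    simp [hx]
  · intro i x hx
    exact mul_eq_zero_of_right _ (Finset.prod_eq_zero (Finset.mem_univ i) (by
      rw [← hx, sq_abs, sub_self]))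
  · intro x hx
    obtain ⟨⟨h0, -⟩, hs⟩ := mem_backwardBox.1 hx
    refine mul_pos (by linarith) (Finset.prod_pos fun i _ => ?_)
    rw [sub_pos, ← sq_abs (x i.succ)]
    exact pow_lt_pow_left₀ ((hs i).trans_lt hrr) (abs_nonneg _) two_ne_zero

theorem integral_cutoff_mul_sum_sq_le (hr : 0 ≤ r) {ζ : (Fin (n + 1) → ℝ) → ℝ}
    (hζ : ContDiff ℝ ∞ ζ) (hbot : ∀ x, x 0 = -r → ζ x = 0)
    (hlat : ∀ (i : Fin n) x, |x i.succ| = r → ζ x = 0) {B : ℝ}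
    (hB : ∀ x ∈ backwardBox n r,
      2 * ζ x * pd ζ 0 x + 4 * ∑ i : Fin n, pd ζ i.succ x ^ 2 ≤ B)
    (hu : IsHeatSolutionOn (backwardBox n r) u) :
    ∫ x in backwardBox n r, ζ x ^ 2 * ∑ i : Fin n, pd u i.succ x ^ 2
      ≤ B * ∫ x in backwardBox n r, u x ^ 2 := by
  have cζ := hζ.continuous
  have cu := hu.contDiff.continuous
  have cpζ := fun i => (contDiff_pd hζ i).continuous
  have cpu := fun i => (contDiff_pd hu.contDiff i).continuous
  have hmono : ∫ x in backwardBox n r, (2 * ζ x * pd ζ 0 x * u x ^ 2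
      - ∑ i : Fin n, (4 * ζ x * pd ζ i.succ x * u x * pd u i.succ x
        + 2 * ζ x ^ 2 * pd u i.succ x ^ 2))
      ≤ ∫ x in backwardBox n r, (B * u x ^ 2 - ζ x ^ 2 * ∑ i : Fin n, pd u i.succ x ^ 2) := by
    refine setIntegral_mono_on (integrableOn_backwardBox (by fun_prop))
      (integrableOn_backwardBox (by fun_prop)) measurableSet_Icc fun x hx => ?_
    have hyoung : ∑ i : Fin n, -(4 * ζ x * pd ζ i.succ x * u x * pd u i.succ x
          + 2 * ζ x ^ 2 * pd u i.succ x ^ 2)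
        ≤ ∑ i : Fin n, (4 * pd ζ i.succ x ^ 2 * u x ^ 2 - ζ x ^ 2 * pd u i.succ x ^ 2) :=
      Finset.sum_le_sum fun i _ => by
        linarith [sq_nonneg (2 * pd ζ i.succ x * u x + ζ x * pd u i.succ x)]
    have hBx := mul_le_mul_of_nonneg_right (hB x hx) (sq_nonneg (u x))
    rw [Finset.sum_sub_distrib, ← Finset.mul_sum, ← Finset.sum_mul, ← Finset.mul_sum,
      Finset.sum_neg_distrib] at hyoung
    linarith
  have henergy := (energy_inequality hr hζ hbot hlat hu).trans hmono
  rw [integral_sub (integrableOn_backwardBox (by fun_prop))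
    (integrableOn_backwardBox (by fun_prop)), integral_const_mul] at henergy
  exact sub_nonneg.1 henergy

theorem caccioppoli_inequality (n : ℕ) (hr : 0 ≤ r) (hrr : r < r') :
    ∃ C : ℝ, 0 ≤ C ∧ ∀ u, IsHeatSolutionOn (backwardBox n r') u → ∀ i : Fin n,
      ∫ x in backwardBox n r, pd u i.succ x ^ 2 ≤ C * ∫ x in backwardBox n r', u x ^ 2 := by
  obtain ⟨ζ, hζ, hbot, hlat, hpos⟩ := exists_boxCutoff n hrr
  have cζ := hζ.continuous
  have cpζ := fun i => (contDiff_pd hζ i).continuous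
  obtain ⟨c, hc, hcζ⟩ : ∃ c > 0, ∀ x ∈ backwardBox n r, c ≤ ζ x ^ 2 :=
    isCompact_Icc.exists_forall_le' (by fun_prop) fun x hx => pow_pos (hpos x hx) 2
  obtain ⟨B, hB⟩ : BddAbove ((fun x => 2 * ζ x * pd ζ 0 x + 4 * ∑ i : Fin n, pd ζ i.succ x ^ 2) ''
      backwardBox n r') := isCompact_Icc.bddAbove_image (by fun_prop)
  refine ⟨c⁻¹ * |B|, by positivity, fun u hu i => ?_⟩
  have cpu := fun i => (contDiff_pd hu.contDiff i).continuous
  have hB' := integral_cutoff_mul_sum_sq_le (hr.trans hrr.le) hζ hbot hlat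
    (fun x hx => (hB (Set.mem_image_of_mem _ hx)).trans (le_abs_self B)) hu
  have hle : c * ∫ x in backwardBox n r, pd u i.succ x ^ 2
      ≤ |B| * ∫ x in backwardBox n r', u x ^ 2 :=
    calc c * ∫ x in backwardBox n r, pd u i.succ x ^ 2
        = ∫ x in backwardBox n r, c * pd u i.succ x ^ 2 := (integral_const_mul _ _).symm
      _ ≤ ∫ x in backwardBox n r, ζ x ^ 2 * ∑ j : Fin n, pd u j.succ x ^ 2 := by
          refine setIntegral_mono_on (integrableOn_backwardBox (by fun_prop))
            (integrableOn_backwardBox (by fun_prop)) measurableSet_Icc fun x hx => ?_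
          exact mul_le_mul (hcζ x hx) (Finset.single_le_sum (fun j _ => sq_nonneg (pd u j.succ x))
            (Finset.mem_univ i)) (sq_nonneg _) (sq_nonneg _)
      _ ≤ ∫ x in backwardBox n r', ζ x ^ 2 * ∑ j : Fin n, pd u j.succ x ^ 2 :=
          setIntegral_backwardBox_mono (by fun_prop) (fun x => by positivity) hrr.le
      _ ≤ _ := hB'
  rwa [mul_assoc, ← div_eq_inv_mul, le_div_iff₀' hc]

/-- The iterated space derivative of `u` along a list of space directions. -/
def spatialPd : List (Fin n) → ((Fin (n + 1) → ℝ) → ℝ) → (Fin (n + 1) → ℝ) → ℝ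
  | [], u => u
  | i :: l, u => spatialPd l (pd u i.succ)

theorem IsHeatSolutionOn.spatialPd (hu : IsHeatSolutionOn U u) (hU : IsSpatiallyOpen U)
    (l : List (Fin n)) : IsHeatSolutionOn U (spatialPd l u) := by
  induction l generalizing u with
  | nil => exact hu
  | cons i _ ih => exact ih (hu.pd_succ hU i)

theorem exists_bound_integral_sq_spatialPd (hU : IsSpatiallyOpen U) (l : List (Fin n))
    (hr : 0 ≤ r) (hrr : r < r') (hr' : backwardBox n r' ⊆ U) :
    ∃ C : ℝ, 0 ≤ C ∧ ∀ u, IsHeatSolutionOn U u →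
      ∫ x in backwardBox n r, spatialPd l u x ^ 2 ≤ C * ∫ x in backwardBox n r', u x ^ 2 := by
  induction l generalizing r' with
  | nil =>
    refine ⟨1, zero_le_one, fun u hu => ?_⟩
    rw [one_mul]
    exact setIntegral_backwardBox_mono (hu.contDiff.continuous.pow 2) (fun x => sq_nonneg _) hrr.le
  | cons i l ih =>
    obtain ⟨s, hrs, hsr⟩ := exists_between hrr
    obtain ⟨C, hC, hl⟩ := ih hrs ((backwardBox_subset hsr.le).trans hr')
    obtain ⟨C', hC', hi⟩ := caccioppoli_inequality n (hr.trans hrs.le) hsr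
    refine ⟨C * C', by positivity, fun u hu => (hl _ (hu.pd_succ hU i)).trans ?_⟩
    rw [mul_assoc]
    exact mul_le_mul_of_nonneg_left (hi u (hu.mono hr') i) hC

theorem exists_bound_integral_sq_pd_zero (hU : IsSpatiallyOpen U)
    (hr : 0 ≤ r) (hrr : r < r') (hr' : backwardBox n r' ⊆ U) :
    ∃ C : ℝ, 0 ≤ C ∧ ∀ u, IsHeatSolutionOn U u →
      ∫ x in backwardBox n r, pd u 0 x ^ 2 ≤ C * ∫ x in backwardBox n r', u x ^ 2 := by
  choose C hC hbound using fun i : Fin n =>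
    exists_bound_integral_sq_spatialPd hU [i, i] hr hrr hr'
  refine ⟨n * ∑ i, C i, mul_nonneg n.cast_nonneg (Finset.sum_nonneg fun i _ => hC i),
    fun u hu => ?_⟩
  have cu := fun i j => (contDiff_pd (contDiff_pd hu.contDiff i) j).continuous
  have cu0 := (contDiff_pd hu.contDiff 0).continuous
  calc ∫ x in backwardBox n r, pd u 0 x ^ 2
      ≤ ∫ x in backwardBox n r, n * ∑ i : Fin n, pd (pd u i.succ) i.succ x ^ 2 := by
        refine setIntegral_mono_on (integrableOn_backwardBox (by fun_prop))
          (integrableOn_backwardBox (by fun_prop)) measurableSet_Icc fun x hx => ?_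
        rw [hu.heat x (hr' (backwardBox_subset hrr.le hx))]
        simpa using sq_sum_le_card_mul_sum_sq (s := Finset.univ)
          (f := fun i : Fin n => pd (pd u i.succ) i.succ x)
    _ = n * ∑ i : Fin n, ∫ x in backwardBox n r, pd (pd u i.succ) i.succ x ^ 2 := by
        rw [integral_const_mul, integral_finsetSum _ fun i _ =>
          integrableOn_backwardBox (by fun_prop)]
    _ ≤ n * ∑ i : Fin n, C i * ∫ x in backwardBox n r', u x ^ 2 := by
        gcongr with i
        exact hbound i u hu
    _ = _ := by rw [← Finset.sum_mul, mul_assoc]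

theorem exists_bound_integral_sobolevDensity (hU : IsSpatiallyOpen U) (l : List (Fin n))
    (hr : 0 ≤ r) (hrr : r < r') (hr' : backwardBox n r' ⊆ U) :
    ∃ C : ℝ, 0 ≤ C ∧ ∀ u, IsHeatSolutionOn U u →
      ∫ x in backwardBox n r, sobolevDensity (l.map Fin.succ ++ [0]) u x
        ≤ C * ∫ x in backwardBox n r', u x ^ 2 := by
  induction l generalizing r' with
  | nil =>
    obtain ⟨C, hC, h0⟩ := exists_bound_integral_sq_pd_zero hU hr hrr hr'
    refine ⟨1 + C, by positivity, fun u hu => ?_⟩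
    have cu := hu.contDiff.continuous
    have cu0 := (contDiff_pd hu.contDiff 0).continuous
    have hmono := setIntegral_backwardBox_mono (f := fun x => u x ^ 2) (by fun_prop)
      (fun x => sq_nonneg _) hrr.le
    simp only [List.map_nil, List.nil_append, sobolevDensity]
    rw [integral_add (integrableOn_backwardBox (by fun_prop))
      (integrableOn_backwardBox (by fun_prop)), add_mul, one_mul]
    exact add_le_add hmono (h0 u hu)
  | cons i l ih =>
    obtain ⟨s, hrs, hsr⟩ := exists_between hrr
    obtain ⟨C, hC, hl⟩ := ih hrs ((backwardBox_subset hsr.le).trans hr')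
    obtain ⟨C', hC', hi⟩ := caccioppoli_inequality n (hr.trans hrs.le) hsr
    refine ⟨C * (1 + C'), by positivity, fun u hu => ?_⟩
    have hmono : ∫ x in backwardBox n s, u x ^ 2 ≤ ∫ x in backwardBox n r', u x ^ 2 :=
      setIntegral_backwardBox_mono (hu.contDiff.continuous.pow 2) (fun x => sq_nonneg _) hsr.le
    simp only [List.map_cons, List.cons_append, sobolevDensity]
    rw [integral_add (integrableOn_backwardBox (continuous_sobolevDensity _ hu.contDiff))
      (integrableOn_backwardBox (continuous_sobolevDensity _ (contDiff_pd hu.contDiff _)))]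
    calc _ ≤ C * (∫ x in backwardBox n s, u x ^ 2)
          + C * ∫ x in backwardBox n s, pd u i.succ x ^ 2 :=
          add_le_add (hl u hu) (hl _ (hu.pd_succ hU i))
      _ ≤ C * (∫ x in backwardBox n r', u x ^ 2)
          + C * (C' * ∫ x in backwardBox n r', u x ^ 2) := by
          gcongr
          exact hi u (hu.mono hr') i
      _ = _ := by ring

theorem exists_bound_sq (hU : IsSpatiallyOpen U) (hr : 0 < r) (hrr : r < r')
    (hr' : backwardBox n r' ⊆ U) :
    ∃ C : ℝ, 0 ≤ C ∧ ∀ u, IsHeatSolutionOn U u →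
      ∀ x ∈ backwardBox n r, u x ^ 2 ≤ C * ∫ y in backwardBox n r', u y ^ 2 := by
  set l : List (Fin (n + 1)) := (List.finRange n).map Fin.succ ++ [0]
  have hl : l.Nodup := by
    simp [l, List.nodup_append, List.nodup_map_iff (Fin.succ_injective n), List.nodup_finRange]
  have hmem (i) : i ∈ l := by cases i using Fin.cases <;> simp [l]
  have hab (i) : (fun _ => -r : Fin (n + 1) → ℝ) i < (Matrix.vecCons 0 fun _ => r) i := by
    cases i using Fin.cases <;> simp <;> linarith
  obtain ⟨C, hC, hbound⟩ := exists_bound_integral_sobolevDensity hU (List.finRange n) hr.le hrr hr'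
  have hK : 0 ≤ (l.map fun i => ((Matrix.vecCons 0 fun _ => r : Fin (n + 1) → ℝ) i - -r)⁻¹
      + 1).prod := List.prod_nonneg <| List.forall_mem_map.2 fun i _ => by
    have := sub_pos.2 (hab i); positivity
  refine ⟨_, mul_nonneg hK hC, fun u hu x hx => ?_⟩
  rw [mul_assoc]
  exact (sq_le_mul_integral_sobolevDensity hab hu.contDiff hl hmem hx).trans
    (mul_le_mul_of_nonneg_left (hbound u hu) hK)

theorem exists_bound_abs_spatialPd (hU : IsSpatiallyOpen U) (m : ℕ) (hr : 0 < r) (hrr : r < r')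
    (hr' : backwardBox n r' ⊆ U) :
    ∃ C : ℝ, 0 ≤ C ∧ ∀ u, IsHeatSolutionOn U u → ∀ l : List (Fin n), l.length ≤ m →
      ∀ x ∈ backwardBox n r, |spatialPd l u x| ≤ C * √(∫ y in backwardBox n r', u y ^ 2) := by
  obtain ⟨s, hrs, hsr⟩ := exists_between hrr
  obtain ⟨C, hC, hsup⟩ := exists_bound_sq hU hr hrs ((backwardBox_subset hsr.le).trans hr')
  choose D _ hint using fun l : List (Fin n) =>
    exists_bound_integral_sq_spatialPd hU l (hr.trans hrs).le hsr hr'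
  obtain ⟨B, hB⟩ := ((List.finite_length_le (Fin n) m).image D).bddAbove
  refine ⟨√(C * |B|), by positivity, fun u hu l hl x hx => ?_⟩
  rw [← Real.sqrt_mul (by positivity)]
  refine Real.abs_le_sqrt ((hsup _ (hu.spatialPd hU l) x hx).trans ?_)
  rw [mul_assoc]
  refine mul_le_mul_of_nonneg_left ((hint l u hu).trans ?_) hC
  gcongr
  exact (hB (Set.mem_image_of_mem D hl)).trans (le_abs_self B)

end HeatEquation

section MaximumPrinciple

variable {d : ℕ} {E : Set (Fin d → ℝ)} {T₀ T₁ : ℝ} {Y Z : ℝ → (Fin d → ℝ) → ℝ}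
  {q : Fin d → ℝ} {b : (Fin d → ℝ) → Fin d → ℝ}

/-- The advection–diffusion operator `∂ₜ - ∑ᵢ (qᵢ ∂ᵢ∂ᵢ + bᵢ ∂ᵢ)` with constant diagonal diffusion
`q` and drift `b`. -/
def parabolicOp (q : Fin d → ℝ) (b : (Fin d → ℝ) → Fin d → ℝ) (Z : ℝ → (Fin d → ℝ) → ℝ) (t : ℝ)
    (x : Fin d → ℝ) : ℝ :=
  deriv (fun s => Z s x) t - ∑ i, (q i * pd (pd (Z t) i) i x + b x i * pd (Z t) i x)

/-- The parabolic boundary of the cylinder `(T₀, T₁] × E`: base and lateral boundary. -/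
def parabolicBoundary (T₀ T₁ : ℝ) (E : Set (Fin d → ℝ)) : Set (ℝ × (Fin d → ℝ)) :=
  (Set.Icc T₀ T₁ ×ˢ E) \ (Set.Ioc T₀ T₁ ×ˢ interior E)

/-- The regularity needed to evaluate `parabolicOp` in the interior of the cylinder, final time
included, and to compare with the values on the parabolic boundary. -/
structure IsParabolicRegularOn (T₀ T₁ : ℝ) (E : Set (Fin d → ℝ)) (Z : ℝ → (Fin d → ℝ) → ℝ) :
    Prop where
  continuousOn : ContinuousOn (fun p : ℝ × (Fin d → ℝ) => Z p.1 p.2) (Set.Icc T₀ T₁ ×ˢ E)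
  contDiffAt : ∀ t ∈ Set.Ioc T₀ T₁, ∀ x ∈ interior E, ContDiffAt ℝ 2 (Z t) x
  differentiableAt : ∀ t ∈ Set.Ioc T₀ T₁, ∀ x ∈ interior E, DifferentiableAt ℝ (fun s => Z s x) t

theorem IsParabolicRegularOn.sub (hY : IsParabolicRegularOn T₀ T₁ E Y)
    (hZ : IsParabolicRegularOn T₀ T₁ E Z) :
    IsParabolicRegularOn T₀ T₁ E fun t x => Y t x - Z t x where
  continuousOn := hY.continuousOn.sub hZ.continuousOn
  contDiffAt t ht x hx := (hY.contDiffAt t ht x hx).sub (hZ.contDiffAt t ht x hx)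
  differentiableAt t ht x hx := (hY.differentiableAt t ht x hx).sub (hZ.differentiableAt t ht x hx)

theorem eventually_differentiableAt_of_contDiffAt {f : (Fin d → ℝ) → ℝ} {x : Fin d → ℝ}
    (hf : ContDiffAt ℝ 2 f x) : ∀ᶠ y in 𝓝 x, DifferentiableAt ℝ f y :=
  (hf.eventually (by simp)).mono fun _ hy => hy.differentiableAt (by simp)

theorem differentiableAt_pd {f : (Fin d → ℝ) → ℝ} {x : Fin d → ℝ} (hf : ContDiffAt ℝ 2 f x)
    (i : Fin d) : DifferentiableAt ℝ (pd f i) x :=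
  ((hf.fderiv_right (m := 1) (by norm_num)).differentiableAt (by simp)).clm_apply
    (differentiableAt_const _)

theorem pd_sub {f g : (Fin d → ℝ) → ℝ} {x : Fin d → ℝ} (hf : DifferentiableAt ℝ f x)
    (hg : DifferentiableAt ℝ g x) (i : Fin d) :
    pd (fun y => f y - g y) i x = pd f i x - pd g i x := by
  simp only [pd, fderiv_fun_sub hf hg, sub_apply]

theorem pd_pd_sub {f g : (Fin d → ℝ) → ℝ} {x : Fin d → ℝ} (hf : ContDiffAt ℝ 2 f x)
    (hg : ContDiffAt ℝ 2 g x) (i : Fin d) :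
    pd (pd (fun y => f y - g y) i) i x = pd (pd f i) i x - pd (pd g i) i x := by
  rw [← pd_sub (differentiableAt_pd hf i) (differentiableAt_pd hg i)]
  refine pd_congr_of_eventuallyEq ?_ i
  filter_upwards [eventually_differentiableAt_of_contDiffAt hf,
    eventually_differentiableAt_of_contDiffAt hg] with y hy hy'
  exact pd_sub hy hy' i

theorem parabolicOp_sub (hY : IsParabolicRegularOn T₀ T₁ E Y)
    (hZ : IsParabolicRegularOn T₀ T₁ E Z) {t : ℝ} (ht : t ∈ Set.Ioc T₀ T₁) {x : Fin d → ℝ}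
    (hx : x ∈ interior E) :
    parabolicOp q b (fun t x => Y t x - Z t x) t x
      = parabolicOp q b Y t x - parabolicOp q b Z t x := by
  have cY := hY.contDiffAt t ht x hx
  have cZ := hZ.contDiffAt t ht x hx
  simp only [parabolicOp, pd_pd_sub cY cZ, Finset.sum_add_distrib, mul_sub, Finset.sum_sub_distrib,
    pd_sub (cY.differentiableAt (by simp)) (cZ.differentiableAt (by simp)),
    deriv_fun_sub (hY.differentiableAt t ht x hx) (hZ.differentiableAt t ht x hx)]
  ring

theorem deriv_deriv_nonpos_of_isLocalMax {f : ℝ → ℝ} {x : ℝ} (h : IsLocalMax f x)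
    (hf : ContinuousAt f x) : deriv (deriv f) x ≤ 0 := by
  by_contra! hpos
  have hmin := isLocalMin_of_deriv_deriv_pos hpos h.deriv_eq_zero hf
  have hconst : f =ᶠ[𝓝 x] fun _ => f x := by
    filter_upwards [h, hmin] with y hle hge using le_antisymm hle hge
  simp [hconst.deriv.deriv_eq] at hpos

theorem pd_pd_nonpos_of_isLocalMax {f : (Fin d → ℝ) → ℝ} {x : Fin d → ℝ} (h : IsLocalMax f x)
    (hf : ContDiffAt ℝ 2 f x) (i : Fin d) : pd (pd f i) i x ≤ 0 := by
  have hupd : ContinuousAt (Function.update x i) (x i) :=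
    (hasDerivAt_update x i (x i)).continuousAt
  have htend : Tendsto (Function.update x i) (𝓝 (x i)) (𝓝 x) := by
    simpa [ContinuousAt] using hupd
  have hderiv : deriv (fun τ => f (Function.update x i τ))
      =ᶠ[𝓝 (x i)] fun τ => pd f i (Function.update x i τ) :=
    (htend.eventually (eventually_differentiableAt_of_contDiffAt hf)).mono fun τ hτ =>
      (hasDerivAt_comp_update i τ hτ).deriv
  rw [pd_eq_deriv_comp_update i (differentiableAt_pd hf i), ← hderiv.deriv_eq]
  refine deriv_deriv_nonpos_of_isLocalMax ?_ ?_
  · simpa [IsLocalMax, IsMaxFilter] using htend.eventually h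
  · exact ContinuousAt.comp (by simpa using hf.continuousAt) hupd

theorem deriv_nonneg_of_eventually_le_left {f : ℝ → ℝ} {t : ℝ} (hf : DifferentiableAt ℝ f t)
    (h : ∀ᶠ s in 𝓝[<] t, f s ≤ f t) : 0 ≤ deriv f t := by
  have hslope : Tendsto (slope f t) (𝓝[<] t) (𝓝 (deriv f t)) :=
    (hasDerivAt_iff_tendsto_slope.1 hf.hasDerivAt).mono_left
      (nhdsWithin_mono t fun s hs => ne_of_lt hs)
  refine ge_of_tendsto hslope ?_
  filter_upwards [h, self_mem_nhdsWithin] with s hs hst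
  rw [slope_def_field]
  exact div_nonneg_of_nonpos (sub_nonpos.2 hs) (sub_nonpos.2 (le_of_lt hst))

theorem parabolicOp_nonneg_of_isMaxOn (hq : 0 ≤ q) (hZ : IsParabolicRegularOn T₀ T₁ E Z) {t : ℝ}
    (ht : t ∈ Set.Ioc T₀ T₁) {x : Fin d → ℝ} (hx : x ∈ interior E) {c : ℝ}
    (hmax : IsMaxOn (fun p : ℝ × (Fin d → ℝ) => Z p.1 p.2 - c * p.1) (Set.Icc T₀ T₁ ×ˢ E) (t, x)) :
    c ≤ parabolicOp q b Z t x := by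
  have hlocal : IsLocalMax (Z t) x := by
    filter_upwards [mem_interior_iff_mem_nhds.1 hx] with y hy
    simpa using hmax (Set.mk_mem_prod (Set.Ioc_subset_Icc_self ht) hy)
  have htime : 0 ≤ deriv (fun s => Z s x - c * s) t := by
    refine deriv_nonneg_of_eventually_le_left
      ((hZ.differentiableAt t ht x hx).sub (by fun_prop)) ?_
    filter_upwards [Ioo_mem_nhdsLT ht.1] with s hs
    exact hmax (Set.mk_mem_prod ⟨hs.1.le, hs.2.le.trans ht.2⟩ (interior_subset hx))
  rw [deriv_fun_sub (hZ.differentiableAt t ht x hx) (by fun_prop),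
    deriv_const_mul_field, deriv_id'', mul_one, sub_nonneg] at htime
  have hspace : ∑ i, (q i * pd (pd (Z t) i) i x + b x i * pd (Z t) i x) ≤ 0 :=
    Finset.sum_nonpos fun i _ => by
      have hgrad : pd (Z t) i x = 0 := by rw [pd, hlocal.fderiv_eq_zero]; rfl
      rw [hgrad, mul_zero, add_zero]
      exact mul_nonpos_of_nonneg_of_nonpos (hq i)
        (pd_pd_nonpos_of_isLocalMax hlocal (hZ.contDiffAt t ht x hx) i)
  unfold parabolicOp
  linarith

theorem le_add_of_parabolicOp_le (hE : IsCompact E) (hq : 0 ≤ q)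
    (hZ : IsParabolicRegularOn T₀ T₁ E Z) {g B : ℝ} (hg : 0 ≤ g)
    (hop : ∀ t ∈ Set.Ioc T₀ T₁, ∀ x ∈ interior E, parabolicOp q b Z t x ≤ g)
    (hbdry : ∀ p ∈ parabolicBoundary T₀ T₁ E, Z p.1 p.2 ≤ B) {t : ℝ} (ht : t ∈ Set.Icc T₀ T₁)
    {x : Fin d → ℝ} (hx : x ∈ E) : Z t x ≤ B + g * (t - T₀) := by
  suffices hstrict : ∀ c, g < c → Z t x ≤ B + c * (t - T₀) by
    have hlim : Tendsto (fun c => B + c * (t - T₀)) (𝓝[>] g) (𝓝 (B + g * (t - T₀))) :=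
      (Continuous.tendsto (by fun_prop) g).mono_left nhdsWithin_le_nhds
    exact ge_of_tendsto hlim (eventually_mem_nhdsWithin.mono hstrict)
  intro c hc
  obtain ⟨⟨s, y⟩, hmem, hmax⟩ := (isCompact_Icc.prod hE).exists_isMaxOn ⟨(t, x), ht, hx⟩
    (hZ.continuousOn.sub (by fun_prop : ContinuousOn (fun p => c * p.1) _))
  by_cases hint : s ∈ Set.Ioc T₀ T₁ ∧ y ∈ interior E
  · exact absurd hc (((parabolicOp_nonneg_of_isMaxOn hq hZ hint.1 hint.2 hmax).trans
      (hop s hint.1 y hint.2)).not_gt)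
  · have hle : Z t x - c * t ≤ Z s y - c * s := hmax (Set.mk_mem_prod ht hx)
    have hB : Z s y ≤ B := hbdry (s, y) ⟨hmem, hint⟩
    have hcs : c * T₀ ≤ c * s := mul_le_mul_of_nonneg_left hmem.1.1 (hg.trans hc.le)
    linarith

theorem abs_le_add_of_abs_parabolicOp_le (hE : IsCompact E) (hq : 0 ≤ q)
    (hZ : IsParabolicRegularOn T₀ T₁ E Z) {g B : ℝ} (hg : 0 ≤ g)
    (hop : ∀ t ∈ Set.Ioc T₀ T₁, ∀ x ∈ interior E, |parabolicOp q b Z t x| ≤ g)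
    (hbdry : ∀ p ∈ parabolicBoundary T₀ T₁ E, |Z p.1 p.2| ≤ B) {t : ℝ} (ht : t ∈ Set.Icc T₀ T₁)
    {x : Fin d → ℝ} (hx : x ∈ E) : |Z t x| ≤ B + g * (t - T₀) := by
  have hzero : IsParabolicRegularOn T₀ T₁ E fun _ _ => 0 :=
    ⟨continuousOn_const, fun _ _ _ _ => contDiffAt_const, fun _ _ _ _ => differentiableAt_const _⟩
  have hop_zero (t x) : parabolicOp q b (fun _ _ => 0) t x = 0 := by simp [parabolicOp, pd_const]
  refine abs_le'.2 ⟨le_add_of_parabolicOp_le hE hq hZ hg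
    (fun t ht x hx => (le_abs_self _).trans (hop t ht x hx))
    (fun p hp => (le_abs_self _).trans (hbdry p hp)) ht hx, ?_⟩
  rw [← zero_sub]
  refine le_add_of_parabolicOp_le (b := b) (Z := fun t x => 0 - Z t x) hE hq (hzero.sub hZ) hg
    (fun t ht x hx => ?_) (fun p hp => ?_) ht hx
  · rw [parabolicOp_sub hzero hZ ht hx, hop_zero, zero_sub]
    exact (neg_le_abs _).trans (hop t ht x hx)
  · rw [zero_sub]
    exact (neg_le_abs _).trans (hbdry p hp)

end MaximumPrinciple

section TwoScaleExpansion

variable {U : Set (Fin 3 → ℝ)} {u v w : (Fin 3 → ℝ) → ℝ} {q K N : ℝ} {D χ₁ χ₂ χ₃ : ℝ → ℝ}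

/-- The operator `∂₀ - q ∂₁∂₁ - ∂₂∂₂ - D(x₂) ∂₁` on functions of space-time, with coordinate `0` as
time: in-plane diffusion with a shear drift along `x₁`. -/
def shearOp (q : ℝ) (D : ℝ → ℝ) (w : (Fin 3 → ℝ) → ℝ) (x : Fin 3 → ℝ) : ℝ :=
  pd w 0 x - q * pd (pd w 1) 1 x - pd (pd w 2) 2 x - D (x 2) * pd w 1 x

theorem shearOp_add (hv : ContDiff ℝ ∞ v) (hw : ContDiff ℝ ∞ w) (x : Fin 3 → ℝ) :
    shearOp q D (fun y => v y + w y) x = shearOp q D v x + shearOp q D w x := by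
  have hpd (i) : pd (fun y => v y + w y) i = fun y => pd v i y + pd w i y := funext fun y =>
    pd_add (hv.differentiable (by simp) y) (hw.differentiable (by simp) y) i
  have hpd₂ (i j) := pd_add (differentiable_pd hv i x) (differentiable_pd hw i x) j
  simp only [shearOp, hpd, hpd₂]
  ring

theorem IsHeatSolutionOn.shearOp_eq (hu : IsHeatSolutionOn U u) {x : Fin 3 → ℝ} (hx : x ∈ U) :
    shearOp q D u x = (1 - q) * pd (pd u 1) 1 x - D (x 2) * pd u 1 x := by
  have hheat := hu.heat x hx
  rw [Fin.sum_univ_two] at hheat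
  rw [shearOp, hheat]
  simp only [Fin.succ_zero_eq_one, Fin.succ_one_eq_two]
  ring

theorem IsHeatSolutionOn.shearOp_coeff_mul (hu : IsHeatSolutionOn U u) {χ : ℝ → ℝ}
    (hχ : ContDiff ℝ ∞ χ) {x : Fin 3 → ℝ} (hx : x ∈ U) :
    shearOp q D (fun y => χ (y 2) * u y) x
      = χ (x 2) * ((1 - q) * pd (pd u 1) 1 x - D (x 2) * pd u 1 x)
        - deriv (deriv χ) (x 2) * u x - 2 * deriv χ (x 2) * pd u 2 x := by
  have dχ := hχ.differentiable (by simp)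
  have dχ' : Differentiable ℝ (deriv χ) :=
    ((contDiff_infty_iff_deriv.1 hχ).2).differentiable (by simp)
  have dcoeff : Differentiable ℝ fun y : Fin 3 → ℝ => χ (y 2) := by fun_prop
  have dcoeff' : Differentiable ℝ fun y : Fin 3 → ℝ => deriv χ (y 2) := by fun_prop
  have du := hu.contDiff.differentiable (by simp)
  have dpu := fun i => differentiable_pd hu.contDiff i
  have hpd (i : Fin 3) (hi : i ≠ 2) :
      pd (fun y => χ (y 2) * u y) i = fun y => χ (y 2) * pd u i y := by
    funext y
    rw [pd_mul (dcoeff y) (du y), pd_comp_eval (dχ _), if_neg hi, zero_mul, zero_add]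
  have hpd₂ : pd (fun y => χ (y 2) * u y) 2
      = fun y => deriv χ (y 2) * u y + χ (y 2) * pd u 2 y := by
    funext y
    rw [pd_mul (dcoeff y) (du y), pd_comp_eval (dχ _), if_pos rfl]
  rw [← hu.shearOp_eq hx, shearOp, shearOp, hpd 0 (by decide), hpd 1 (by decide), hpd₂,
    pd_mul (dcoeff x) (dpu 1 x), pd_add ((dcoeff' x).fun_mul (du x)) ((dcoeff x).fun_mul (dpu 2 x)),
    pd_mul (dcoeff' x) (du x), pd_mul (dcoeff x) (dpu 2 x), pd_comp_eval (dχ _),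
    pd_comp_eval (dχ _), pd_comp_eval (dχ' _), if_neg (by decide), if_pos rfl, if_pos rfl]
  ring

/-- The cell problems of the two-scale expansion of `shearOp q D` around the heat operator: `χ₁`
corrects the drift, and the `1 - q` in the equation of `χ₂` is the diffusivity which the drift
adds to `q`. -/
structure IsCorrectorTriple (q : ℝ) (D χ₁ χ₂ χ₃ : ℝ → ℝ) : Prop where
  contDiff₁ : ContDiff ℝ ∞ χ₁
  contDiff₂ : ContDiff ℝ ∞ χ₂
  contDiff₃ : ContDiff ℝ ∞ χ₃
  cell₁ : ∀ t, deriv (deriv χ₁) t = -D t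
  cell₂ : ∀ t, deriv (deriv χ₂) t = (1 - q) - χ₁ t * D t
  cell₃ : ∀ t, deriv (deriv χ₃) t = -2 * deriv χ₁ t

/-- `K` bounds the corrector quantities which enter the error of the two-scale expansion. -/
structure IsCorrectorBound (D χ₁ χ₂ χ₃ : ℝ → ℝ) (K : ℝ) : Prop where
  corr₁ : ∀ t, |χ₁ t| ≤ K
  corr₂ : ∀ t, |χ₂ t| ≤ K
  corr₃ : ∀ t, |χ₃ t| ≤ K
  deriv₂ : ∀ t, |deriv χ₂ t| ≤ K
  deriv₃ : ∀ t, |deriv χ₃ t| ≤ K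
  drift₂ : ∀ t, |D t * χ₂ t| ≤ K
  drift₃ : ∀ t, |D t * χ₃ t| ≤ K

/-- The two-scale expansion `u + χ₁ ∂₁u + χ₂ ∂₁∂₁u + χ₃ ∂₂∂₁u`, the correctors being functions of
`x₂`. -/
def twoScaleExpansion (χ₁ χ₂ χ₃ : ℝ → ℝ) (u : (Fin 3 → ℝ) → ℝ) (x : Fin 3 → ℝ) : ℝ :=
  u x + χ₁ (x 2) * spatialPd [0] u x + χ₂ (x 2) * spatialPd [0, 0] u x
    + χ₃ (x 2) * spatialPd [0, 1] u x

theorem contDiff_spatialPd {n : ℕ} {f : (Fin (n + 1) → ℝ) → ℝ} (hf : ContDiff ℝ ∞ f)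
    (l : List (Fin n)) : ContDiff ℝ ∞ (spatialPd l f) := by
  induction l generalizing f with
  | nil => exact hf
  | cons i _ ih => exact ih (contDiff_pd hf i.succ)

theorem contDiff_coeff_mul {χ : ℝ → ℝ} (hχ : ContDiff ℝ ∞ χ) (hw : ContDiff ℝ ∞ w) :
    ContDiff ℝ ∞ fun y : Fin 3 → ℝ => χ (y 2) * w y :=
  (hχ.comp (contDiff_apply ℝ ℝ 2)).mul hw

theorem IsCorrectorTriple.contDiff_twoScaleExpansion (h : IsCorrectorTriple q D χ₁ χ₂ χ₃)
    (hu : ContDiff ℝ ∞ u) : ContDiff ℝ ∞ (twoScaleExpansion χ₁ χ₂ χ₃ u) :=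
  ((hu.add (contDiff_coeff_mul h.contDiff₁ (contDiff_spatialPd hu _))).add
    (contDiff_coeff_mul h.contDiff₂ (contDiff_spatialPd hu _))).add
    (contDiff_coeff_mul h.contDiff₃ (contDiff_spatialPd hu _))

/-- The cell problems cancel every term with at most two derivatives of `u`. -/
theorem IsCorrectorTriple.shearOp_twoScaleExpansion (h : IsCorrectorTriple q D χ₁ χ₂ χ₃)
    (hU : IsSpatiallyOpen U) (hu : IsHeatSolutionOn U u) {x : Fin 3 → ℝ} (hx : x ∈ U) :
    shearOp q D (twoScaleExpansion χ₁ χ₂ χ₃ u) x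
      = χ₁ (x 2) * ((1 - q) * spatialPd [0, 0, 0] u x)
        + χ₂ (x 2) * ((1 - q) * spatialPd [0, 0, 0, 0] u x - D (x 2) * spatialPd [0, 0, 0] u x)
        - 2 * deriv χ₂ (x 2) * spatialPd [0, 0, 1] u x
        + χ₃ (x 2) * ((1 - q) * spatialPd [0, 1, 0, 0] u x - D (x 2) * spatialPd [0, 1, 0] u x)
        - 2 * deriv χ₃ (x 2) * spatialPd [0, 1, 1] u x := by
  have s₁ := contDiff_coeff_mul h.contDiff₁ (contDiff_spatialPd hu.contDiff [0])
  have s₂ := contDiff_coeff_mul h.contDiff₂ (contDiff_spatialPd hu.contDiff [0, 0])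
  have s₃ := contDiff_coeff_mul h.contDiff₃ (contDiff_spatialPd hu.contDiff [0, 1])
  unfold twoScaleExpansion
  rw [shearOp_add ((hu.contDiff.add s₁).add s₂) s₃, shearOp_add (hu.contDiff.add s₁) s₂,
    shearOp_add hu.contDiff s₁, hu.shearOp_eq hx,
    (hu.spatialPd hU _).shearOp_coeff_mul h.contDiff₁ hx,
    (hu.spatialPd hU _).shearOp_coeff_mul h.contDiff₂ hx,
    (hu.spatialPd hU _).shearOp_coeff_mul h.contDiff₃ hx, h.cell₁, h.cell₂, h.cell₃]
  simp only [spatialPd, Fin.succ_zero_eq_one, Fin.succ_one_eq_two]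
  ring

theorem abs_mul_le_of_abs_le {a b : ℝ} (ha : |a| ≤ K) (hb : |b| ≤ N) : |a * b| ≤ K * N := by
  rw [abs_mul]
  exact mul_le_mul ha hb (abs_nonneg b) ((abs_nonneg a).trans ha)

theorem IsCorrectorBound.abs_twoScaleExpansion_sub_le (hK : IsCorrectorBound D χ₁ χ₂ χ₃ K)
    {x : Fin 3 → ℝ} (hN : ∀ l : List (Fin 2), l.length ≤ 4 → |spatialPd l u x| ≤ N) :
    |twoScaleExpansion χ₁ χ₂ χ₃ u x - u x| ≤ 3 * (K * N) := by
  have h₁ := abs_le.1 (abs_mul_le_of_abs_le (hK.corr₁ (x 2)) (hN [0] (by simp)))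
  have h₂ := abs_le.1 (abs_mul_le_of_abs_le (hK.corr₂ (x 2)) (hN [0, 0] (by simp)))
  have h₃ := abs_le.1 (abs_mul_le_of_abs_le (hK.corr₃ (x 2)) (hN [0, 1] (by simp)))
  unfold twoScaleExpansion
  rw [abs_le]
  constructor <;> linarith

theorem IsCorrectorTriple.abs_shearOp_twoScaleExpansion_le (h : IsCorrectorTriple q D χ₁ χ₂ χ₃)
    (hK : IsCorrectorBound D χ₁ χ₂ χ₃ K) (hq : |1 - q| ≤ 1) (hU : IsSpatiallyOpen U)
    (hu : IsHeatSolutionOn U u) {x : Fin 3 → ℝ} (hx : x ∈ U)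
    (hN : ∀ l : List (Fin 2), l.length ≤ 4 → |spatialPd l u x| ≤ N) :
    |shearOp q D (twoScaleExpansion χ₁ χ₂ χ₃ u) x| ≤ 9 * (K * N) := by
  have hqN (l : List (Fin 2)) (hl : l.length ≤ 4) : |(1 - q) * spatialPd l u x| ≤ N := by
    simpa only [one_mul] using abs_mul_le_of_abs_le hq (hN l hl)
  have h₁ := abs_le.1 (abs_mul_le_of_abs_le (hK.corr₁ (x 2)) (hqN [0, 0, 0] (by simp)))
  have h₂ := abs_le.1 (abs_mul_le_of_abs_le (hK.corr₂ (x 2)) (hqN [0, 0, 0, 0] (by simp)))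
  have h₂' := abs_le.1 (abs_mul_le_of_abs_le (hK.deriv₂ (x 2)) (hN [0, 0, 1] (by simp)))
  have h₂D := abs_le.1 (abs_mul_le_of_abs_le (hK.drift₂ (x 2)) (hN [0, 0, 0] (by simp)))
  have h₃ := abs_le.1 (abs_mul_le_of_abs_le (hK.corr₃ (x 2)) (hqN [0, 1, 0, 0] (by simp)))
  have h₃' := abs_le.1 (abs_mul_le_of_abs_le (hK.deriv₃ (x 2)) (hN [0, 1, 1] (by simp)))
  have h₃D := abs_le.1 (abs_mul_le_of_abs_le (hK.drift₃ (x 2)) (hN [0, 1, 0] (by simp)))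
  rw [h.shearOp_twoScaleExpansion hU hu hx, abs_le]
  constructor <;> linarith

end TwoScaleExpansion

section Correctors

theorem deriv_const_mul_cos (A c p : ℝ) :
    deriv (fun t => A * cos (c * t + p)) = fun t => -(A * c) * sin (c * t + p) := by
  funext t
  have h : HasDerivAt (fun t => c * t + p) c t := by
    simpa using ((hasDerivAt_id t).const_mul c).add_const p
  rw [(h.cos.const_mul A).deriv]
  ring

theorem deriv_const_mul_sin (A c p : ℝ) :
    deriv (fun t => A * sin (c * t + p)) = fun t => A * c * cos (c * t + p) := by
  funext t
  have h : HasDerivAt (fun t => c * t + p) c t := by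
    simpa using ((hasDerivAt_id t).const_mul c).add_const p
  rw [(h.sin.const_mul A).deriv]
  ring

variable {β k : ℝ}

theorem isCorrectorTriple_cos (hk : k ≠ 0) (β p : ℝ) :
    IsCorrectorTriple (1 - β ^ 2 / 2) (fun t => β * k * cos (k * t + p))
      (fun t => β / k * cos (k * t + p)) (fun t => β ^ 2 / (8 * k ^ 2) * cos (2 * k * t + 2 * p))
      (fun t => -2 * β / k ^ 2 * sin (k * t + p)) where
  contDiff₁ := by fun_prop
  contDiff₂ := by fun_prop
  contDiff₃ := by fun_prop
  cell₁ t := by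
    rw [deriv_const_mul_cos, deriv_const_mul_sin]
    field_simp
  cell₂ t := by
    have hdouble : cos (2 * k * t + 2 * p) = 2 * cos (k * t + p) ^ 2 - 1 := by
      rw [← cos_two_mul]; ring_nf
    rw [deriv_const_mul_cos, deriv_const_mul_sin]
    simp only [hdouble]
    field_simp
    ring
  cell₃ t := by
    rw [deriv_const_mul_sin, deriv_const_mul_cos, deriv_const_mul_cos]
    field_simp

theorem abs_div_mul_le {A B τ : ℝ} (hk : 0 < k) (hA : |A| ≤ B) (hτ : |τ| ≤ 1) :
    |A / k * τ| ≤ B / k := by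
  have hAk : |A / k| ≤ B / k := by
    rw [abs_div, abs_of_pos hk]
    gcongr
  exact (abs_mul_le_of_abs_le hAk hτ).trans_eq (mul_one _)

theorem isCorrectorBound_cos (hk : 1 ≤ k) (hβ : β ^ 2 ≤ 2) (p : ℝ) :
    IsCorrectorBound (fun t => β * k * cos (k * t + p))
      (fun t => β / k * cos (k * t + p)) (fun t => β ^ 2 / (8 * k ^ 2) * cos (2 * k * t + 2 * p))
      (fun t => -2 * β / k ^ 2 * sin (k * t + p)) (4 / k) := by
  have hk0 : 0 < k := by linarith
  have hk1 : |k⁻¹| ≤ 1 := by rw [abs_of_pos (inv_pos.2 hk0)]; exact inv_le_one_of_one_le₀ hk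
  have hβ' : |β| ≤ 3 / 2 := abs_le_of_sq_le_sq (by linarith) (by norm_num)
  have hβ₂ : |β ^ 2| ≤ 2 := by rwa [abs_of_nonneg (sq_nonneg β)]
  have hbound {A τ : ℝ} (hA : |A| ≤ 4) (hτ : |τ| ≤ 1) := abs_div_mul_le hk0 hA hτ
  have htrig {a b : ℝ} (ha : |a| ≤ 1) (hb : |b| ≤ 1) : |a * b| ≤ 1 :=
    (abs_mul_le_of_abs_le ha hb).trans_eq (mul_one 1)
  refine ⟨fun t => hbound (by linarith) (abs_cos_le_one _), fun t => ?_, fun t => ?_, fun t => ?_,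
    fun t => ?_, fun t => ?_, fun t => ?_⟩
  · convert hbound (A := β ^ 2 * k⁻¹ / 8) ?_ (abs_cos_le_one (2 * k * t + 2 * p)) using 2
    · field_simp
    · have := abs_mul_le_of_abs_le hβ₂ hk1
      rw [abs_div, abs_of_pos (by norm_num : (0 : ℝ) < 8)]
      linarith
  · convert hbound (A := -2 * (β * k⁻¹)) ?_ (abs_sin_le_one (k * t + p)) using 2
    · field_simp
    · have := abs_mul_le_of_abs_le hβ' hk1
      rw [abs_mul, abs_neg, abs_two]
      linarith
  · rw [deriv_const_mul_cos]
    convert hbound (A := -(β ^ 2 / 4)) ?_ (abs_sin_le_one (2 * k * t + 2 * p)) using 2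
    · field_simp
      ring
    · rw [abs_neg, abs_div, abs_of_pos (by norm_num : (0 : ℝ) < 4)]
      linarith
  · rw [deriv_const_mul_sin]
    convert hbound (A := -2 * β) ?_ (abs_cos_le_one (k * t + p)) using 2
    · field_simp
    · rw [abs_mul, abs_neg, abs_two]
      linarith
  · convert hbound (A := β ^ 2 * β / 8) ?_ (htrig (abs_cos_le_one (k * t + p))
      (abs_cos_le_one (2 * k * t + 2 * p))) using 2
    · field_simp
    · have := abs_mul_le_of_abs_le hβ₂ hβ'
      rw [abs_div, abs_of_pos (by norm_num : (0 : ℝ) < 8)]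
      linarith
  · convert hbound (A := -2 * β ^ 2) ?_ (htrig (abs_cos_le_one (k * t + p))
      (abs_sin_le_one (k * t + p))) using 2
    · field_simp
    · rw [abs_mul, abs_neg, abs_two]
      linarith

end Correctors

section ShearApproximation

variable {U : Set (Fin 3 → ℝ)} {r r' : ℝ}

theorem exists_shear_approximation (hU : IsSpatiallyOpen U) (hr : 0 < r) (hrr : r < r')
    (hr' : backwardBox 2 r' ⊆ U) :
    ∃ C : ℝ, 0 ≤ C ∧ ∀ u, IsHeatSolutionOn U u → ∀ β k p : ℝ, β ^ 2 ≤ 2 → 0 < k →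
      ∃ w, ContDiff ℝ ∞ w ∧ ∀ x ∈ backwardBox 2 r,
        |w x - u x| ≤ C / k * √(∫ y in backwardBox 2 r', u y ^ 2) ∧
        |shearOp (1 - β ^ 2 / 2) (fun t => β * k * cos (k * t + p)) w x|
          ≤ C / k * √(∫ y in backwardBox 2 r', u y ^ 2) := by
  obtain ⟨C, hC, hbound⟩ := exists_bound_abs_spatialPd hU 4 hr hrr hr'
  refine ⟨36 * C, by positivity, fun u hu β k p hβ hk => ?_⟩
  set I := √(∫ y in backwardBox 2 r', u y ^ 2)
  have : 0 ≤ I := Real.sqrt_nonneg _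
  obtain hk1 | hk1 := le_or_gt 1 k
  · have hcorr := isCorrectorTriple_cos hk.ne' β p
    have hcorr_le := isCorrectorBound_cos hk1 hβ p
    have hq : |1 - (1 - β ^ 2 / 2)| ≤ 1 := by
      rw [sub_sub_cancel, abs_of_nonneg (by positivity)]
      linarith
    have hK : 4 / k * (C * I) = 4 * C / k * I := by ring
    have hpos : 0 ≤ 4 * C / k * I := by positivity
    refine ⟨_, hcorr.contDiff_twoScaleExpansion hu.contDiff, fun x hx => ?_⟩
    have hN := fun l hl => hbound u hu l hl x hx
    have hsub := hcorr_le.abs_twoScaleExpansion_sub_le hN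
    have hop := hcorr.abs_shearOp_twoScaleExpansion_le hcorr_le hq hU hu
      (hr' (backwardBox_subset hrr.le hx)) hN
    rw [show 36 * C / k * I = 9 * (4 * C / k * I) by ring]
    exact ⟨by linarith, by linarith⟩
  · -- A slowly varying shear is not averaged, but then `C / k` is large and `w = 0` will do.
    have hCk : C * I ≤ 36 * C / k * I := by
      gcongr
      rw [le_div_iff₀ hk]
      nlinarith
    refine ⟨fun _ => 0, contDiff_const, fun x hx => ⟨?_, ?_⟩⟩
    · rw [zero_sub, abs_neg]
      exact (hbound u hu [] (by simp) x hx).trans hCk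
    · simp only [shearOp, pd_const, mul_zero, sub_zero, abs_zero]
      positivity

end ShearApproximation

section Rescaling

variable {n : ℕ}

/-- A function of time and space as a function of the single space-time variable, whose coordinate
`0` is time. -/
def spaceTime (θ : ℝ → (Fin n → ℝ) → ℝ) (z : Fin (n + 1) → ℝ) : ℝ :=
  θ (z 0) (Matrix.vecTail z)

theorem contDiff_spaceTime {θ : ℝ → (Fin n → ℝ) → ℝ}
    (hθ : ContDiff ℝ ∞ fun p : ℝ × (Fin n → ℝ) => θ p.1 p.2) : ContDiff ℝ ∞ (spaceTime θ) :=
  hθ.comp ((contDiff_apply ℝ ℝ 0).prodMk (contDiff_pi.2 fun i => contDiff_apply ℝ ℝ i.succ))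

theorem parabolicOp_vecCons {w : (Fin (n + 1) → ℝ) → ℝ} (hw : ContDiff ℝ ∞ w) (q : Fin n → ℝ)
    (b : (Fin n → ℝ) → Fin n → ℝ) (t : ℝ) (x : Fin n → ℝ) :
    parabolicOp q b (fun t x => w (Matrix.vecCons t x)) t x
      = pd w 0 (Matrix.vecCons t x) - ∑ i : Fin n,
        (q i * pd (pd w i.succ) i.succ (Matrix.vecCons t x)
          + b x i * pd w i.succ (Matrix.vecCons t x)) := by
  simp only [parabolicOp, pd_comp_vecCons hw, pd_comp_vecCons (contDiff_pd hw _),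
    (hasDerivAt_comp_vecCons hw t x).deriv]

theorem isParabolicRegularOn_vecCons {w : (Fin (n + 1) → ℝ) → ℝ} (hw : ContDiff ℝ ∞ w)
    (T₀ T₁ : ℝ) (E : Set (Fin n → ℝ)) :
    IsParabolicRegularOn T₀ T₁ E fun t x => w (Matrix.vecCons t x) where
  continuousOn := (hw.comp contDiff_vecCons).continuous.continuousOn
  contDiffAt t _ _ _ := (contDiff_infty.1 (contDiff_comp_vecCons hw t) 2).contDiffAt
  differentiableAt t _ x _ := (hasDerivAt_comp_vecCons hw t x).differentiableAt

theorem contDiff_comp_add_mul {d : ℕ} {f : (Fin d → ℝ) → ℝ} (hf : ContDiff ℝ ∞ f)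
    (c l : Fin d → ℝ) : ContDiff ℝ ∞ fun y => f (c + l * y) :=
  hf.comp (contDiff_const.add (contDiff_const.mul contDiff_id))

theorem pd_pd_comp_add_mul {d : ℕ} {f : (Fin d → ℝ) → ℝ} (hf : ContDiff ℝ ∞ f) (c : Fin d → ℝ)
    {l : Fin d → ℝ} (hl : ∀ i, l i ≠ 0) (i : Fin d) (y : Fin d → ℝ) :
    pd (pd (fun y => f (c + l * y)) i) i y = l i ^ 2 * pd (pd f i) i (c + l * y) := by
  rw [pd_comp_add_mul f c hl, pd_const_mul
    ((contDiff_comp_add_mul (contDiff_pd hf i) c l).differentiable (by simp) y),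
    pd_comp_add_mul _ c hl]
  ring

theorem isHeatSolutionOn_comp_add_mul {θ : ℝ → (Fin n → ℝ) → ℝ}
    (hθ : ContDiff ℝ ∞ fun p : ℝ × (Fin n → ℝ) => θ p.1 p.2) (c : Fin (n + 1) → ℝ)
    {l : Fin (n + 1) → ℝ} (hl : ∀ i, l i ≠ 0) {q : Fin n → ℝ} (hlq : ∀ i, l i.succ ^ 2 = l 0 * q i)
    {U : Set (Fin (n + 1) → ℝ)}
    (hθU : ∀ y ∈ U, parabolicOp q 0 θ ((c + l * y) 0) (Matrix.vecTail (c + l * y)) = 0) :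
    IsHeatSolutionOn U fun y => spaceTime θ (c + l * y) where
  contDiff := contDiff_comp_add_mul (contDiff_spaceTime hθ) c l
  heat y hy := by
    have h := hθU y hy
    change parabolicOp q 0 (fun t x => spaceTime θ (Matrix.vecCons t x)) (Matrix.vecHead _) _ = 0
      at h
    simp only [parabolicOp_vecCons (contDiff_spaceTime hθ), Matrix.cons_head_tail, Pi.zero_apply,
      zero_mul, add_zero, sub_eq_zero] at h
    simp only [pd_comp_add_mul _ c hl 0, pd_pd_comp_add_mul (contDiff_spaceTime hθ) c hl, hlq,
      mul_assoc, ← Finset.mul_sum, ← h]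

end Rescaling

section Averages

theorem setIntegral_le_measure_mul_setAverage {α : Type*} [MeasurableSpace α] {μ : Measure α}
    {f : α → ℝ} {s t : Set α} (hst : s ⊆ t) (ht : μ t ≠ ⊤) (hf : IntegrableOn f t μ) (hf0 : 0 ≤ f) :
    ∫ x in s, f x ∂μ ≤ μ.real t * ⨍ x in t, f x ∂μ := by
  rw [← smul_eq_mul, measure_smul_setAverage f ht]
  exact setIntegral_mono_set hf (Eventually.of_forall hf0) hst.eventuallyLE

theorem sqrt_setAverage_sq_le {α : Type*} [MeasurableSpace α] {μ : Measure α} {f : α → ℝ}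
    {s : Set α} {B : ℝ} (hB : 0 ≤ B) (h : ∀ x ∈ s, |f x| ≤ B) :
    √(⨍ x in s, f x ^ 2 ∂μ) ≤ B := by
  rw [Real.sqrt_le_left hB, setAverage_eq, smul_eq_mul]
  obtain ht | ht := eq_or_ne (μ s) ⊤
  · simpa only [Measure.real, ht, ENNReal.toReal_top, inv_zero, zero_mul] using sq_nonneg B
  · have hbound (x) (hx : x ∈ s) : ‖f x ^ 2‖ ≤ B ^ 2 := by
      rw [Real.norm_eq_abs, abs_pow]
      exact pow_le_pow_left₀ (abs_nonneg _) (h x hx) 2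
    have hint : ∫ x in s, f x ^ 2 ∂μ ≤ B ^ 2 * μ.real s :=
      (le_abs_self _).trans (norm_setIntegral_le_of_norm_le_const ht.lt_top hbound)
    exact inv_mul_le_of_le_mul₀ measureReal_nonneg (sq_nonneg B) (by linarith)

theorem setAverage_comp_add_continuousLinearEquiv {E F : Type*}
    [NormedAddCommGroup E] [NormedSpace ℝ E] [MeasurableSpace E] [BorelSpace E]
    [NormedAddCommGroup F] [NormedSpace ℝ F] [FiniteDimensional ℝ F]
    [MeasurableSpace F] [BorelSpace F] (μ : Measure E) [μ.IsAddHaarMeasure] (ν : Measure F)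
    [ν.IsAddHaarMeasure] (L : E ≃L[ℝ] F) (c : F) (f : F → ℝ) (s : Set F) :
    ⨍ y in (fun y => c + L y) ⁻¹' s, f (c + L y) ∂μ = ⨍ p in s, f p ∂ν := by
  let e : E ≃ₜ F := L.toHomeomorph.trans (Homeomorph.addLeft c)
  have : (μ.map L).IsAddHaarMeasure := L.isAddHaarMeasure_map μ
  set k := (μ.map L).addHaarScalarFactor ν
  have hk : (k : ℝ) ≠ 0 :=
    NNReal.coe_ne_zero.2 (Measure.addHaarScalarFactor_pos_of_isAddHaarMeasure (μ.map L) ν).ne'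
  have hmap : μ.map e = k • ν := by
    have he : (e : E → F) = (c + ·) ∘ L := rfl
    rw [he, ← Measure.map_map (by fun_prop) L.continuous.measurable, map_add_left_eq_self]
    exact Measure.isAddLeftInvariant_eq_smul _ _
  have hint : ∫ y in e ⁻¹' s, f (e y) ∂μ = ∫ p in s, f p ∂μ.map e :=
    (e.measurableEmbedding.setIntegral_map f s).symm
  have hvol : μ.real (e ⁻¹' s) = (μ.map e).real s :=
    congrArg ENNReal.toReal (e.measurableEmbedding.map_apply μ s).symm
  change ⨍ y in e ⁻¹' s, f (e y) ∂μ = _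
  rw [setAverage_eq, setAverage_eq, hint, hvol, hmap, Measure.restrict_smul,
    integral_smul_nnreal_measure, measureReal_nnreal_smul_apply, NNReal.smul_def, smul_eq_mul,
    smul_eq_mul, smul_eq_mul]
  field_simp

end Averages

section Normalization

/-- The anisotropy `√(1 + P²/2)` between the axes of the ellipsoid adapted to the homogenized
matrix of a shear flow of Péclet number `P`. -/
def stretch (P : ℝ) : ℝ := √(1 + P ^ 2 / 2)

/-- The amplitude of the shear flow of Péclet number `P` in the coordinates where the homogenized
matrix is the identity. -/
def shearAmplitude (P : ℝ) : ℝ := P / stretch P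

theorem stretch_pos (P : ℝ) : 0 < stretch P := Real.sqrt_pos.2 (by positivity)

theorem stretch_sq (P : ℝ) : stretch P ^ 2 = 1 + P ^ 2 / 2 := Real.sq_sqrt (by positivity)

theorem shearAmplitude_mul_stretch (P : ℝ) : shearAmplitude P * stretch P = P :=
  div_mul_cancel₀ P (stretch_pos P).ne'

theorem one_sub_shearAmplitude_sq_mul_stretch_sq (P : ℝ) :
    (1 - shearAmplitude P ^ 2 / 2) * stretch P ^ 2 = 1 := by
  have h : (shearAmplitude P * stretch P) ^ 2 = P ^ 2 := by rw [shearAmplitude_mul_stretch]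
  linear_combination stretch_sq P - h / 2

theorem shearAmplitude_sq_le (P : ℝ) : shearAmplitude P ^ 2 ≤ 2 := by
  rw [shearAmplitude, div_pow, stretch_sq, div_le_iff₀ (by positivity)]
  linarith

/-- The Péclet number of the shear flow of stream function `aε² sin(2πx₂/ε)`. -/
def peclet (κ a ε : ℝ) : ℝ := a * ε ^ 2 / κ

variable {κ a ε R : ℝ}

theorem mul_stretch_peclet_sq (hκ : 0 < κ) :
    κ * stretch (peclet κ a ε) ^ 2 = κ + a ^ 2 * ε ^ 4 / (2 * κ) := by
  rw [stretch_sq, peclet]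
  field_simp

/-- The sizes, in the time and space directions, of the cylinder `pCyl κ a ε t₀ x₀ R`. -/
def cylinderScale (κ a ε R : ℝ) : Fin 3 → ℝ := ![R ^ 2 / κ, R * stretch (peclet κ a ε), R]

theorem cylinderScale_ne_zero (hκ : 0 < κ) (hR : 0 < R) (i : Fin 3) :
    cylinderScale κ a ε R i ≠ 0 := by
  have hs := stretch_pos (peclet κ a ε)
  fin_cases i
  · exact (div_pos (pow_pos hR 2) hκ).ne'
  · exact (mul_pos hR hs).ne'
  · exact hR.ne'

/-- The cylinder `(-s², 0] × B_s`, where `B_s` is the Euclidean disc: the image of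
`pCyl κ a ε t₀ x₀ (s * R)` in normalized coordinates. -/
def roundCylinder (s : ℝ) : Set (Fin 3 → ℝ) :=
  {y | y 0 ∈ Set.Ioc (-s ^ 2) 0 ∧ y 1 ^ 2 + y 2 ^ 2 ≤ s ^ 2}

variable {t₀ : ℝ} {x₀ : Fin 2 → ℝ} {s : ℝ}

theorem vecTail_mem_ellipsoid_iff (hκ : 0 < κ) (hR : 0 < R) (y : Fin 3 → ℝ) :
    Matrix.vecTail (Matrix.vecCons t₀ x₀ + cylinderScale κ a ε R * y) ∈ ellipsoid κ a ε x₀ (s * R)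
      ↔ y 1 ^ 2 + y 2 ^ 2 ≤ s ^ 2 := by
  have hs := stretch_pos (peclet κ a ε)
  have h : κ * (x₀ 0 + R * stretch (peclet κ a ε) * y 1 - x₀ 0) ^ 2
      / (κ * stretch (peclet κ a ε) ^ 2) + (x₀ 1 + R * y 2 - x₀ 1) ^ 2
      = R ^ 2 * (y 1 ^ 2 + y 2 ^ 2) := by
    field_simp
    ring
  calc _ ↔ κ * (x₀ 0 + R * stretch (peclet κ a ε) * y 1 - x₀ 0) ^ 2
          / (κ * stretch (peclet κ a ε) ^ 2) + (x₀ 1 + R * y 2 - x₀ 1) ^ 2 ≤ (s * R) ^ 2 := by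
        rw [ellipsoid, ← mul_stretch_peclet_sq hκ]
        rfl
    _ ↔ R ^ 2 * (y 1 ^ 2 + y 2 ^ 2) ≤ R ^ 2 * s ^ 2 := by
        rw [h, mul_pow, mul_comm (s ^ 2)]
    _ ↔ y 1 ^ 2 + y 2 ^ 2 ≤ s ^ 2 := mul_le_mul_iff_right₀ (pow_pos hR 2)

theorem mem_Ioc_iff_of_cylinderScale (hκ : 0 < κ) (hR : 0 < R) (y : Fin 3 → ℝ) :
    (Matrix.vecCons t₀ x₀ + cylinderScale κ a ε R * y) 0 ∈ Set.Ioc (t₀ - (s * R) ^ 2 / κ) t₀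
      ↔ y 0 ∈ Set.Ioc (-s ^ 2) 0 := by
  have h : 0 < R ^ 2 / κ := by positivity
  have hbot : t₀ - (s * R) ^ 2 / κ = t₀ + R ^ 2 / κ * -s ^ 2 := by ring
  rw [hbot]
  refine and_congr ((add_lt_add_iff_left t₀).trans (mul_lt_mul_iff_right₀ h)) ?_
  rw [← mul_le_mul_iff_right₀ h (b := y 0), mul_zero]
  exact add_le_iff_nonpos_right t₀

theorem preimage_pCyl (hκ : 0 < κ) (hR : 0 < R) :
    (fun y => ((Matrix.vecCons t₀ x₀ + cylinderScale κ a ε R * y) 0,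
        Matrix.vecTail (Matrix.vecCons t₀ x₀ + cylinderScale κ a ε R * y))) ⁻¹'
      pCyl κ a ε t₀ x₀ (s * R) = roundCylinder s :=
  Set.ext fun y =>
    and_congr (mem_Ioc_iff_of_cylinderScale hκ hR y) (vecTail_mem_ellipsoid_iff hκ hR y)

theorem setAverage_pCyl (hκ : 0 < κ) (hR : 0 < R) (f : ℝ × (Fin 2 → ℝ) → ℝ) :
    ⨍ p in pCyl κ a ε t₀ x₀ (s * R), f p
      = ⨍ y in roundCylinder s, f ((Matrix.vecCons t₀ x₀ + cylinderScale κ a ε R * y) 0,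
          Matrix.vecTail (Matrix.vecCons t₀ x₀ + cylinderScale κ a ε R * y)) := by
  have : (volume : Measure (ℝ × (Fin 2 → ℝ))).IsAddHaarMeasure := by
    rw [Measure.volume_eq_prod]
    infer_instance
  let L : (Fin 3 → ℝ) ≃L[ℝ] ℝ × (Fin 2 → ℝ) :=
    (scaleEquiv (cylinderScale κ a ε R) (cylinderScale_ne_zero hκ hR)).trans
      (Fin.consEquivL ℝ fun _ : Fin 3 => ℝ).symm
  have hL (y : Fin 3 → ℝ) : (t₀, x₀) + L y
      = ((Matrix.vecCons t₀ x₀ + cylinderScale κ a ε R * y) 0,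
        Matrix.vecTail (Matrix.vecCons t₀ x₀ + cylinderScale κ a ε R * y)) := by
    rw [ContinuousLinearEquiv.trans_apply, scaleEquiv_apply]
    rfl
  rw [← setAverage_comp_add_continuousLinearEquiv volume volume L (t₀, x₀) f]
  simp only [hL, preimage_pCyl hκ hR]

theorem isSpatiallyOpen_setOf_vecTail_mem {n : ℕ} {V : Set (Fin n → ℝ)} (hV : IsOpen V)
    (T : Set ℝ) : IsSpatiallyOpen {y : Fin (n + 1) → ℝ | y 0 ∈ T ∧ Matrix.vecTail y ∈ V} := by
  rintro y ⟨hy0, hyV⟩ i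
  have htail (τ : ℝ) : Matrix.vecTail (Function.update y i.succ τ)
      = Function.update (Matrix.vecTail y) i τ := by
    ext j
    simp [Matrix.vecTail, Function.update_apply]
  have hcont : ContinuousAt (Function.update (Matrix.vecTail y) i) (y i.succ) :=
    (hasDerivAt_update _ i _).continuousAt
  have hmem : Function.update (Matrix.vecTail y) i (y i.succ) ∈ V := by
    rwa [← htail, Function.update_eq_self]
  filter_upwards [hcont.eventually (hV.mem_nhds hmem)] with τ hτ
  exact ⟨by rwa [Function.update_of_ne (Fin.succ_ne_zero i).symm], by rwa [htail]⟩

theorem roundCylinder_subset_backwardBox (hs : 1 ≤ s) :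
    roundCylinder s ⊆ backwardBox 2 (s ^ 2) := by
  rintro y ⟨⟨h0, h0'⟩, hy⟩
  have hle (x : ℝ) (hx : x ^ 2 ≤ s ^ 2) : |x| ≤ s ^ 2 :=
    (abs_le_of_sq_le_sq hx (by linarith)).trans (by nlinarith)
  exact mem_backwardBox.2 ⟨⟨h0.le, h0'⟩, Fin.forall_fin_two.2
    ⟨hle (y 1) (by nlinarith [sq_nonneg (y 2)]), hle (y 2) (by nlinarith [sq_nonneg (y 1)])⟩⟩

theorem backwardBox_subset_roundCylinder {r : ℝ} (hrs : r < s ^ 2)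
    (hrs' : 2 * r ^ 2 < s ^ 2) :
    backwardBox 2 r
      ⊆ {y | y 0 ∈ Set.Ioc (-s ^ 2) 0 ∧ Matrix.vecTail y ∈ {x | x 0 ^ 2 + x 1 ^ 2 < s ^ 2}} := by
  intro y hy
  obtain ⟨⟨h0, h0'⟩, hy⟩ := mem_backwardBox.1 hy
  have hsq (i : Fin 2) : y i.succ ^ 2 ≤ r ^ 2 := sq_le_sq' (abs_le.1 (hy i)).1 (abs_le.1 (hy i)).2
  exact ⟨⟨by linarith, h0'⟩, (add_le_add (hsq 0) (hsq 1)).trans_lt (by linarith)⟩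

theorem setIntegral_backwardBox_le_setAverage_pCyl {θ : ℝ → (Fin 2 → ℝ) → ℝ}
    (hθ : Continuous fun p : ℝ × (Fin 2 → ℝ) => θ p.1 p.2) (hκ : 0 < κ) (hR : 0 < R) :
    ∫ y in backwardBox 2 (7 / 5),
        spaceTime θ (Matrix.vecCons t₀ x₀ + cylinderScale κ a ε R * y) ^ 2
      ≤ volume.real (roundCylinder 2) * ⨍ p in pCyl κ a ε t₀ x₀ (2 * R), θ p.1 p.2 ^ 2 := by
  have hcont : Continuous fun y : Fin 3 → ℝ =>
      spaceTime θ (Matrix.vecCons t₀ x₀ + cylinderScale κ a ε R * y) ^ 2 := by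
    have htail : Continuous fun z : Fin 3 → ℝ => Matrix.vecTail z :=
      continuous_pi fun i => continuous_apply i.succ
    exact ((hθ.comp ((continuous_apply 0).prodMk htail)).comp (by fun_prop)).pow 2
  have hsub : roundCylinder 2 ⊆ backwardBox 2 4 := by
    convert roundCylinder_subset_backwardBox one_le_two using 2; norm_num
  rw [setAverage_pCyl hκ hR]
  refine setIntegral_le_measure_mul_setAverage (fun y hy => ?_)
    ((measure_mono hsub).trans_lt measure_Icc_lt_top).ne
    ((integrableOn_backwardBox hcont).mono_set hsub) fun y => sq_nonneg _
  obtain ⟨h0, hy⟩ := backwardBox_subset_roundCylinder (s := 2) (by norm_num) (by norm_num) hy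
  exact ⟨h0, hy.le⟩

/-- The affine change of variables inverse to `y ↦ vecCons t₀ x₀ + cylinderScale κ a ε R * y`. -/
def normalizedPoint (κ a ε t₀ : ℝ) (x₀ : Fin 2 → ℝ) (R : ℝ) (z : Fin 3 → ℝ) : Fin 3 → ℝ :=
  -((cylinderScale κ a ε R)⁻¹ * Matrix.vecCons t₀ x₀) + (cylinderScale κ a ε R)⁻¹ * z

theorem add_cylinderScale_mul_normalizedPoint (hκ : 0 < κ) (hR : 0 < R) (z : Fin 3 → ℝ) :
    Matrix.vecCons t₀ x₀ + cylinderScale κ a ε R * normalizedPoint κ a ε t₀ x₀ R z = z := by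
  ext i
  have h := cylinderScale_ne_zero (a := a) (ε := ε) hκ hR i
  simp only [normalizedPoint, Pi.add_apply, Pi.mul_apply, Pi.neg_apply, Pi.inv_apply]
  field_simp
  ring

theorem normalizedPoint_vecCons_mem_backwardBox (hκ : 0 < κ) (hR : 0 < R) {t : ℝ}
    (ht : t ∈ Set.Icc (t₀ - R ^ 2 / κ) t₀) {x : Fin 2 → ℝ} (hx : x ∈ ellipsoid κ a ε x₀ R) :
    normalizedPoint κ a ε t₀ x₀ R (Matrix.vecCons t x) ∈ backwardBox 2 1 := by
  set y := normalizedPoint κ a ε t₀ x₀ R (Matrix.vecCons t x)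
  have hy : Matrix.vecCons t₀ x₀ + cylinderScale κ a ε R * y = Matrix.vecCons t x :=
    add_cylinderScale_mul_normalizedPoint hκ hR _
  have htime : t₀ + R ^ 2 / κ * y 0 = t := congrFun hy 0
  have hspace : y 1 ^ 2 + y 2 ^ 2 ≤ 1 ^ 2 := by
    rw [← vecTail_mem_ellipsoid_iff (κ := κ) (a := a) (ε := ε) (t₀ := t₀) (x₀ := x₀) hκ hR, hy,
      one_mul]
    exact hx
  have hscale : 0 < R ^ 2 / κ := by positivity
  rw [← htime] at ht
  exact mem_backwardBox.2 ⟨⟨by nlinarith [ht.1], by nlinarith [ht.2]⟩, Fin.forall_fin_two.2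
    ⟨abs_le_of_sq_le_sq (a := y 1) (by nlinarith [sq_nonneg (y 2)]) zero_le_one,
      abs_le_of_sq_le_sq (a := y 2) (by nlinarith [sq_nonneg (y 1)]) zero_le_one⟩⟩

theorem isCompact_ellipsoid (hκ : 0 < κ) (hR : 0 < R) : IsCompact (ellipsoid κ a ε x₀ R) := by
  have hclosed : IsClosed (ellipsoid κ a ε x₀ R) := isClosed_le (by fun_prop) continuous_const
  have hcont : Continuous fun y : Fin 3 → ℝ =>
      Matrix.vecTail (Matrix.vecCons 0 x₀ + cylinderScale κ a ε R * y) :=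
    continuous_pi fun i => (continuous_apply i.succ).comp (by fun_prop)
  refine (isCompact_Icc.image hcont).of_isClosed_subset hclosed fun x hx =>
    ⟨normalizedPoint κ a ε 0 x₀ R (Matrix.vecCons 0 x),
      normalizedPoint_vecCons_mem_backwardBox hκ hR (t := 0) ⟨?_, le_rfl⟩ hx, ?_⟩
  · rw [zero_sub, neg_nonpos]
    positivity
  · simp only [add_cylinderScale_mul_normalizedPoint hκ hR, Matrix.tail_cons]

end Normalization

section ShearFlow

variable {κ a ε : ℝ}

/-- The drift of the equation `∂ₜθ = div(𝐚^ε∇θ)`, which is `∂ₜθ = κΔθ + shearDrift a ε · ∇θ`. -/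
def shearDrift (a ε : ℝ) (x : Fin 2 → ℝ) : Fin 2 → ℝ :=
  ![a * ε ^ 2 * (2 * π / ε) * cos (2 * π / ε * x 1), 0]

theorem contDiff_aEps (κ a ε : ℝ) (i j : Fin 2) : ContDiff ℝ ∞ fun x => aEps κ a ε x i j := by
  unfold aEps
  fun_prop

theorem pd_aEps (κ a ε : ℝ) (i j k : Fin 2) (x : Fin 2 → ℝ) :
    pd (fun y => aEps κ a ε y i j) k x
      = if k = 1 then a * ε ^ 2 * (2 * π / ε) * cos (2 * π / ε * x 1) * Iperp i j else 0 := by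
  have h : HasDerivAt (fun t => κ * (if i = j then 1 else 0)
      + a * ε ^ 2 * sin (2 * π * t / ε) * Iperp i j)
      (a * ε ^ 2 * (cos (2 * π * x 1 / ε) * (2 * π * 1 / ε)) * Iperp i j) (x 1) :=
    (((((hasDerivAt_id _).const_mul _).div_const ε).sin.const_mul _).mul_const _).const_add _
  rw [show 2 * π / ε * x 1 = 2 * π * x 1 / ε by ring]
  refine (pd_comp_eval h.differentiableAt k).trans ?_
  rw [h.deriv]
  congr 1
  ring

theorem sum_pd_sum_aEps_mul_pd {f : (Fin 2 → ℝ) → ℝ} {x : Fin 2 → ℝ} (hf : ContDiffAt ℝ 2 f x) :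
    ∑ i, pd (fun y => ∑ j, aEps κ a ε y i j * pd f j y) i x
      = ∑ i, (κ * pd (pd f i) i x + shearDrift a ε x i * pd f i x) := by
  have ha (i j : Fin 2) : DifferentiableAt ℝ (fun y => aEps κ a ε y i j) x :=
    (contDiff_aEps κ a ε i j).contDiffAt.differentiableAt (by simp)
  have hsum (i : Fin 2) : pd (fun y => ∑ j, aEps κ a ε y i j * pd f j y) i x
      = ∑ j, (pd (fun y => aEps κ a ε y i j) i x * pd f j x + aEps κ a ε x i j * pd (pd f j) i x) :=
    (pd_sum _ (fun j _ => (ha i j).fun_mul (differentiableAt_pd hf j)) i).trans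
      (Finset.sum_congr rfl fun j _ => pd_mul (ha i j) (differentiableAt_pd hf j) i)
  simp only [hsum, pd_aEps]
  simp only [Fin.sum_univ_two, pd_comm_of_contDiffAt hf 1 0, shearDrift, aEps, Iperp, Fin.isValue,
    zero_ne_one, ↓reduceIte, zero_mul, mul_one, and_true, and_false, mul_zero, add_zero, zero_add,
    one_ne_zero, mul_neg, neg_mul, Matrix.cons_val_zero, Matrix.cons_val_one,
    Matrix.cons_val_fin_one]
  ring

variable {R t₀ : ℝ} {x₀ : Fin 2 → ℝ} {w : (Fin 3 → ℝ) → ℝ}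

theorem contDiff_comp_normalizedPoint (hw : ContDiff ℝ ∞ w) :
    ContDiff ℝ ∞ fun z => w (normalizedPoint κ a ε t₀ x₀ R z) :=
  contDiff_comp_add_mul hw _ _

theorem parabolicOp_comp_normalizedPoint (hκ : 0 < κ) (hR : 0 < R) (hw : ContDiff ℝ ∞ w) (t : ℝ)
    (x : Fin 2 → ℝ) :
    parabolicOp (fun _ => κ) (shearDrift a ε)
        (fun t x => w (normalizedPoint κ a ε t₀ x₀ R (Matrix.vecCons t x))) t x
      = κ / R ^ 2 * shearOp (1 - shearAmplitude (peclet κ a ε) ^ 2 / 2)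
          (fun τ => shearAmplitude (peclet κ a ε) * (2 * π * R / ε)
            * cos (2 * π * R / ε * τ + 2 * π / ε * x₀ 1)) w
          (normalizedPoint κ a ε t₀ x₀ R (Matrix.vecCons t x)) := by
  set y := normalizedPoint κ a ε t₀ x₀ R (Matrix.vecCons t x)
  have hs : 0 < stretch (peclet κ a ε) := stretch_pos _
  have hl (i : Fin 3) : (cylinderScale κ a ε R)⁻¹ i ≠ 0 :=
    inv_ne_zero (cylinderScale_ne_zero hκ hR i)
  have hpd (i : Fin 3) : pd (fun z => w (normalizedPoint κ a ε t₀ x₀ R z)) i (Matrix.vecCons t x)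
      = (cylinderScale κ a ε R i)⁻¹ * pd w i y :=
    congrFun (pd_comp_add_mul w _ hl i) _
  have hpd2 (i : Fin 3) :
      pd (pd (fun z => w (normalizedPoint κ a ε t₀ x₀ R z)) i) i (Matrix.vecCons t x)
        = (cylinderScale κ a ε R i)⁻¹ ^ 2 * pd (pd w i) i y :=
    pd_pd_comp_add_mul hw _ hl i _
  have hdiffusion : 1 - shearAmplitude (peclet κ a ε) ^ 2 / 2 = 1 / stretch (peclet κ a ε) ^ 2 :=
    eq_div_of_mul_eq (pow_pos hs 2).ne' (one_sub_shearAmplitude_sq_mul_stretch_sq _)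
  have hphase : 2 * π * R / ε * y 2 + 2 * π / ε * x₀ 1 = 2 * π / ε * x 1 := by
    have hx : x₀ 1 + R * y 2 = x 1 :=
      congrFun (add_cylinderScale_mul_normalizedPoint hκ hR (Matrix.vecCons t x)) 2
    rw [← hx]
    ring
  rw [parabolicOp_vecCons (contDiff_comp_normalizedPoint hw), Fin.sum_univ_two, shearOp,
    hdiffusion, hphase, shearAmplitude]
  simp only [hpd, hpd2, shearDrift, cylinderScale, Fin.isValue, Matrix.cons_val_zero, inv_div,
    Fin.succ_zero_eq_one, Matrix.cons_val_one, mul_inv_rev, Fin.succ_one_eq_two, Matrix.cons_val,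
    inv_pow, Matrix.cons_val_fin_one, zero_mul, add_zero, one_div]
  generalize stretch (peclet κ a ε) = σ at hs
  rw [peclet]
  generalize cos (2 * π / ε * x 1) = c
  field_simp
  ring

theorem abs_sub_le_of_shear_approximation (hκ : 0 < κ) (hR : 0 < R) (hw : ContDiff ℝ ∞ w)
    {θ θε : ℝ → (Fin 2 → ℝ) → ℝ} {δ : ℝ}
    (happrox : ∀ y ∈ backwardBox 2 1,
      |w y - spaceTime θ (Matrix.vecCons t₀ x₀ + cylinderScale κ a ε R * y)| ≤ δ ∧
      |shearOp (1 - shearAmplitude (peclet κ a ε) ^ 2 / 2)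
        (fun τ => shearAmplitude (peclet κ a ε) * (2 * π * R / ε)
          * cos (2 * π * R / ε * τ + 2 * π / ε * x₀ 1)) w y| ≤ δ)
    (hreg : IsParabolicRegularOn (t₀ - R ^ 2 / κ) t₀ (ellipsoid κ a ε x₀ R) θε)
    (hop : ∀ t ∈ Set.Ioc (t₀ - R ^ 2 / κ) t₀, ∀ x ∈ interior (ellipsoid κ a ε x₀ R),
      parabolicOp (fun _ => κ) (shearDrift a ε) θε t x = 0)
    (hbdry : ∀ p ∈ parabolicBoundary (t₀ - R ^ 2 / κ) t₀ (ellipsoid κ a ε x₀ R),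
      θε p.1 p.2 = θ p.1 p.2)
    {t : ℝ} (ht : t ∈ Set.Icc (t₀ - R ^ 2 / κ) t₀) {x : Fin 2 → ℝ}
    (hx : x ∈ ellipsoid κ a ε x₀ R) : |θε t x - θ t x| ≤ 3 * δ := by
  let W (t : ℝ) (x : Fin 2 → ℝ) : ℝ := w (normalizedPoint κ a ε t₀ x₀ R (Matrix.vecCons t x))
  have hW : IsParabolicRegularOn (t₀ - R ^ 2 / κ) t₀ (ellipsoid κ a ε x₀ R) W :=
    isParabolicRegularOn_vecCons (contDiff_comp_normalizedPoint hw) _ _ _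
  have hWθ {t : ℝ} (ht : t ∈ Set.Icc (t₀ - R ^ 2 / κ) t₀) {x : Fin 2 → ℝ}
      (hx : x ∈ ellipsoid κ a ε x₀ R) : |W t x - θ t x| ≤ δ := by
    have h := (happrox _ (normalizedPoint_vecCons_mem_backwardBox hκ hR ht hx)).1
    rwa [add_cylinderScale_mul_normalizedPoint hκ hR] at h
  have hδ : 0 ≤ δ := (abs_nonneg _).trans (hWθ ht hx)
  have hWop : ∀ t ∈ Set.Ioc (t₀ - R ^ 2 / κ) t₀, ∀ x ∈ interior (ellipsoid κ a ε x₀ R),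
      |parabolicOp (fun _ => κ) (shearDrift a ε) (fun t x => θε t x - W t x) t x|
        ≤ κ / R ^ 2 * δ := by
    intro t ht x hx
    rw [parabolicOp_sub hreg hW ht hx, hop t ht x hx, zero_sub, abs_neg,
      parabolicOp_comp_normalizedPoint hκ hR hw, abs_mul, abs_of_pos (by positivity)]
    have h := happrox _ (normalizedPoint_vecCons_mem_backwardBox hκ hR
      (Set.Ioc_subset_Icc_self ht) (interior_subset hx))
    exact mul_le_mul_of_nonneg_left h.2 (by positivity)
  have hWbdry : ∀ p ∈ parabolicBoundary (t₀ - R ^ 2 / κ) t₀ (ellipsoid κ a ε x₀ R),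
      |θε p.1 p.2 - W p.1 p.2| ≤ δ := by
    intro p hp
    rw [hbdry p hp, abs_sub_comm]
    exact hWθ hp.1.1 hp.1.2
  calc |θε t x - θ t x| ≤ |θε t x - W t x| + |W t x - θ t x| := abs_sub_le _ _ _
    _ ≤ δ + κ / R ^ 2 * δ * (t - (t₀ - R ^ 2 / κ)) + δ := by
        gcongr
        · exact abs_le_add_of_abs_parabolicOp_le (isCompact_ellipsoid hκ hR) (fun _ => hκ.le)
            (hreg.sub hW) (by positivity) hWop hWbdry ht hx
        · exact hWθ ht hx
    _ ≤ δ + κ / R ^ 2 * δ * (R ^ 2 / κ) + δ := by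
        gcongr
        linarith [ht.2]
    _ = 3 * δ := by
        field_simp
        ring

theorem isHeatSolutionOn_rescale (hκ : 0 < κ) (hR : 0 < R) {θ : ℝ → (Fin 2 → ℝ) → ℝ}
    (hθ : ContDiff ℝ ∞ fun p : ℝ × (Fin 2 → ℝ) => θ p.1 p.2) {s : ℝ}
    (heq : ∀ p ∈ pCyl κ a ε t₀ x₀ (s * R), deriv (fun s => θ s p.2) p.1
      = (κ + a ^ 2 * ε ^ 4 / (2 * κ)) * pd (pd (θ p.1) 0) 0 p.2 + κ * pd (pd (θ p.1) 1) 1 p.2) :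
    IsHeatSolutionOn {y | y 0 ∈ Set.Ioc (-s ^ 2) 0 ∧
        Matrix.vecTail y ∈ {x | x 0 ^ 2 + x 1 ^ 2 < s ^ 2}}
      fun y => spaceTime θ (Matrix.vecCons t₀ x₀ + cylinderScale κ a ε R * y) := by
  refine isHeatSolutionOn_comp_add_mul hθ _ (cylinderScale_ne_zero hκ hR)
    (q := ![κ + a ^ 2 * ε ^ 4 / (2 * κ), κ]) (Fin.forall_fin_two.2 ⟨?_, ?_⟩) fun y hy => ?_
  · rw [← mul_stretch_peclet_sq hκ]
    change (R * stretch (peclet κ a ε)) ^ 2 = R ^ 2 / κ * (κ * stretch (peclet κ a ε) ^ 2)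
    field_simp
  · exact (div_mul_cancel₀ _ hκ.ne').symm
  · have hmem : y ∈ roundCylinder s := ⟨hy.1, le_of_lt hy.2⟩
    rw [← preimage_pCyl (κ := κ) (a := a) (ε := ε) (t₀ := t₀) (x₀ := x₀) hκ hR] at hmem
    have h := heq _ hmem
    rw [parabolicOp, h, Fin.sum_univ_two]
    simp

theorem exists_shear_approximation_of_pCyl :
    ∃ C : ℝ, 0 < C ∧ ∀ κ a ε : ℝ, 0 < κ → 0 < ε → ∀ (t₀ : ℝ) (x₀ : Fin 2 → ℝ) (R : ℝ), 0 < R →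
      ∀ θ : ℝ → (Fin 2 → ℝ) → ℝ, ContDiff ℝ ∞ (fun p : ℝ × (Fin 2 → ℝ) => θ p.1 p.2) →
      (∀ p ∈ pCyl κ a ε t₀ x₀ (2 * R), deriv (fun s => θ s p.2) p.1
        = (κ + a ^ 2 * ε ^ 4 / (2 * κ)) * pd (pd (θ p.1) 0) 0 p.2
          + κ * pd (pd (θ p.1) 1) 1 p.2) →
      ∃ w, ContDiff ℝ ∞ w ∧ ∀ y ∈ backwardBox 2 1,
        |w y - spaceTime θ (Matrix.vecCons t₀ x₀ + cylinderScale κ a ε R * y)|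
          ≤ C * (ε / R) * √(⨍ p in pCyl κ a ε t₀ x₀ (2 * R), θ p.1 p.2 ^ 2) ∧
        |shearOp (1 - shearAmplitude (peclet κ a ε) ^ 2 / 2)
          (fun τ => shearAmplitude (peclet κ a ε) * (2 * π * R / ε)
            * cos (2 * π * R / ε * τ + 2 * π / ε * x₀ 1)) w y|
          ≤ C * (ε / R) * √(⨍ p in pCyl κ a ε t₀ x₀ (2 * R), θ p.1 p.2 ^ 2) := by
  have hopen : IsSpatiallyOpen {y : Fin 3 → ℝ | y 0 ∈ Set.Ioc (-2 ^ 2 : ℝ) 0 ∧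
      Matrix.vecTail y ∈ {x | x 0 ^ 2 + x 1 ^ 2 < (2 : ℝ) ^ 2}} :=
    isSpatiallyOpen_setOf_vecTail_mem (isOpen_lt (by fun_prop) continuous_const) _
  obtain ⟨C, hC, happrox⟩ := exists_shear_approximation hopen one_pos (by norm_num)
    (backwardBox_subset_roundCylinder (r := 7 / 5) (by norm_num) (by norm_num))
  refine ⟨C * √(volume.real (roundCylinder 2)) + 1, by positivity, ?_⟩
  intro κ a ε hκ hε t₀ x₀ R hR θ hθ hθeq
  obtain ⟨w, hw, hw_approx⟩ := happrox _ (isHeatSolutionOn_rescale hκ hR hθ hθeq)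
    (shearAmplitude (peclet κ a ε)) (2 * π * R / ε) (2 * π / ε * x₀ 1) (shearAmplitude_sq_le _)
    (by positivity)
  have hle : C / (2 * π * R / ε) * √(∫ y in backwardBox 2 (7 / 5),
        spaceTime θ (Matrix.vecCons t₀ x₀ + cylinderScale κ a ε R * y) ^ 2)
      ≤ (C * √(volume.real (roundCylinder 2)) + 1) * (ε / R)
          * √(⨍ p in pCyl κ a ε t₀ x₀ (2 * R), θ p.1 p.2 ^ 2) :=
    calc
      _ ≤ C / (1 * R / ε) * √(volume.real (roundCylinder 2)
            * ⨍ p in pCyl κ a ε t₀ x₀ (2 * R), θ p.1 p.2 ^ 2) := by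
          gcongr
          · linarith [pi_gt_three]
          · exact setIntegral_backwardBox_le_setAverage_pCyl hθ.continuous hκ hR
      _ = C * √(volume.real (roundCylinder 2)) * (ε / R)
            * √(⨍ p in pCyl κ a ε t₀ x₀ (2 * R), θ p.1 p.2 ^ 2) := by
          rw [Real.sqrt_mul measureReal_nonneg]
          field_simp
      _ ≤ _ := by
          gcongr
          exact le_add_of_nonneg_right zero_le_one
  exact ⟨w, hw, fun y hy => (hw_approx y hy).imp (·.trans hle) (·.trans hle)⟩

end ShearFlow

theorem quantitative_homogenization_shear_general :
    ∃ C : ℝ, 0 < C ∧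
      ∀ (κ a ε : ℝ), 0 < κ → 0 < ε →
      ∀ (t₀ : ℝ) (x₀ : Fin 2 → ℝ) (R : ℝ), 0 < R →
      ∀ θ : ℝ → (Fin 2 → ℝ) → ℝ,
        ContDiff ℝ ∞ (fun p : ℝ × (Fin 2 → ℝ) => θ p.1 p.2) →
        (∀ p ∈ pCyl κ a ε t₀ x₀ (2 * R), deriv (fun s => θ s p.2) p.1
          = (κ + a ^ 2 * ε ^ 4 / (2 * κ)) * pd (pd (θ p.1) 0) 0 p.2
            + κ * pd (pd (θ p.1) 1) 1 p.2) →
      ∀ θε : ℝ → (Fin 2 → ℝ) → ℝ,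
        ContinuousOn (fun p : ℝ × (Fin 2 → ℝ) => θε p.1 p.2)
          (Set.Icc (t₀ - R ^ 2 / κ) t₀ ×ˢ ellipsoid κ a ε x₀ R) →
        (∀ t ∈ Set.Ioc (t₀ - R ^ 2 / κ) t₀,
          ContDiffOn ℝ 2 (θε t) (interior (ellipsoid κ a ε x₀ R)) ∧
          ∀ x ∈ interior (ellipsoid κ a ε x₀ R),
            DifferentiableAt ℝ (fun s => θε s x) t ∧
            deriv (fun s => θε s x) t
              = ∑ i, pd (fun y => ∑ j, aEps κ a ε y i j * pd (θε t) j y) i x) →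
        (∀ p ∈ pBdry κ a ε t₀ x₀ R, θε p.1 p.2 = θ p.1 p.2) →
      ∀ t ∈ Set.Icc (t₀ - R ^ 2 / κ) t₀, ∀ x ∈ ellipsoid κ a ε x₀ R,
        |θε t x - θ t x|
          ≤ C * (ε / R) * √(⨍ p in pCyl κ a ε t₀ x₀ (2 * R), θ p.1 p.2 ^ 2) := by
  obtain ⟨C, hC, happrox⟩ := exists_shear_approximation_of_pCyl
  refine ⟨3 * C, by positivity, ?_⟩
  intro κ a ε hκ hε t₀ x₀ R hR θ hθ hθeq θε hcont heq hbdry t ht x hx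
  obtain ⟨w, hw, hw_approx⟩ := happrox κ a ε hκ hε t₀ x₀ R hR θ hθ hθeq
  have hreg : IsParabolicRegularOn (t₀ - R ^ 2 / κ) t₀ (ellipsoid κ a ε x₀ R) θε :=
    ⟨hcont, fun t ht x hx => (heq t ht).1.contDiffAt (isOpen_interior.mem_nhds hx),
      fun t ht x hx => ((heq t ht).2 x hx).1⟩
  have hop (t) (ht : t ∈ Set.Ioc (t₀ - R ^ 2 / κ) t₀) (x)
      (hx : x ∈ interior (ellipsoid κ a ε x₀ R)) :
      parabolicOp (fun _ => κ) (shearDrift a ε) θε t x = 0 := by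
    rw [parabolicOp, ((heq t ht).2 x hx).2, sum_pd_sum_aEps_mul_pd (hreg.contDiffAt t ht x hx),
      sub_self]
  rw [mul_assoc 3, mul_assoc 3]
  exact abs_sub_le_of_shear_approximation hκ hR hw hw_approx hreg hop hbdry ht hx

/-- **Quantitative homogenization for a shear flow (Taylor diffusion
estimate).** There is a universal constant `C` such that: if `θ` solves the
homogenized equation `∂_t θ = div(𝐚̄∇θ)` on `[0,1] × T²`, `Q_{2R}(t₀,x₀) ⊆
[0,1] × T²`, and `θ_ε` solves `∂_t θ_ε = div(𝐚^ε∇θ_ε)` in `Q_R(t₀,x₀)` with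
`θ_ε = θ` on `∂_par Q_R`, then
`sup_t (⨍_{x₀+E_R} |θ_ε − θ|²)^{1/2} ≤ C(1 + aε²/κ)(ε/R)(⨍_{Q_{2R}}|θ|²)^{1/2}`. -/
theorem quantitative_homogenization_shear :
    ∃ C : ℝ, 0 < C ∧
      ∀ (κ a ε : ℝ), 0 < κ → 0 < a → 0 < ε →
      ∀ (t₀ : ℝ) (x₀ : Fin 2 → ℝ) (R : ℝ), 0 < R →
      0 ≤ t₀ - (2 * R) ^ 2 / κ → t₀ ≤ 1 →
      ∀ θ : ℝ → (Fin 2 → ℝ) → ℝ,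
        ContDiff ℝ (⊤ : ℕ∞) (fun p : ℝ × (Fin 2 → ℝ) => θ p.1 p.2) →
        (∀ t, SpacePeriodic (θ t)) →
        (∀ t ∈ Set.Icc (0:ℝ) 1, ∀ x,
          deriv (fun s => θ s x) t
            = (κ + a ^ 2 * ε ^ 4 / (2 * κ)) * pd (pd (θ t) 0) 0 x
              + κ * pd (pd (θ t) 1) 1 x) →
      ∀ θε : ℝ → (Fin 2 → ℝ) → ℝ,
        ContinuousOn (fun p : ℝ × (Fin 2 → ℝ) => θε p.1 p.2)
          (Set.Icc (t₀ - R ^ 2 / κ) t₀ ×ˢ ellipsoid κ a ε x₀ R) →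
        (∀ t ∈ Set.Ioc (t₀ - R ^ 2 / κ) t₀,
          ContDiffOn ℝ 2 (θε t) (interior (ellipsoid κ a ε x₀ R)) ∧
          ∀ x ∈ interior (ellipsoid κ a ε x₀ R),
            DifferentiableAt ℝ (fun s => θε s x) t ∧
            deriv (fun s => θε s x) t
              = ∑ i, pd (fun y => ∑ j, aEps κ a ε y i j * pd (θε t) j y) i x) →
        (∀ p ∈ pBdry κ a ε t₀ x₀ R, θε p.1 p.2 = θ p.1 p.2) →
      ∀ t ∈ Set.Ioc (t₀ - R ^ 2 / κ) t₀,
        Real.sqrt (⨍ x in ellipsoid κ a ε x₀ R, (θε t x - θ t x) ^ 2)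
          ≤ C * (1 + a * ε ^ 2 / κ) * (ε / R)
            * Real.sqrt (⨍ p in pCyl κ a ε t₀ x₀ (2 * R), (θ p.1 p.2) ^ 2) := by
  obtain ⟨C, hC, hbound⟩ := quantitative_homogenization_shear_general
  refine ⟨C, hC, fun κ a ε hκ ha hε t₀ x₀ R hR hbot htop θ hθ _ hθeq θε hcont heq hbdry t ht => ?_⟩
  have hθeq' (p) (hp : p ∈ pCyl κ a ε t₀ x₀ (2 * R)) :=
    hθeq p.1 ⟨hbot.trans hp.1.1.le, hp.1.2.trans htop⟩ p.2
  refine sqrt_setAverage_sq_le (by positivity) fun x hx =>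
    (hbound κ a ε hκ hε t₀ x₀ R hR θ hθ hθeq' θε hcont heq hbdry t
      (Set.Ioc_subset_Icc_self ht) x hx).trans ?_
  gcongr
  exact le_mul_of_one_le_right hC.le (le_add_of_nonneg_right (by positivity))
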